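/- arXiv:1911.11402 — 5 statements merged into one kernel-verified Lean document; each statement's English description precedes it below -/
import Mathlib

section
/- Let 1/3 < λ < 1, g ∈ C^λ₀([0,1];ℝ), ξ ∈ ℝ, b ∈ C_b¹(ℝ;ℝ) and σ ∈ C_b²(ℝ;ℝ). Then the Doss–Sussmann function x_t(ξ,g) = φ(a_t,g_t) satisfies: for every t ∈ [0,1] the Russo–Vallois symmetric integral ∫₀^t σ(x_u) d°g_u exists and x_t = ξ + ∫₀^t b(x_u) du + ∫₀^t σ(x_u) d°g_u. Moreover x is the unique solution of this equation in the class 𝔠 of all λ-Hölder continuous functions y : [0,1] → ℝ for which there exist a function f : ℝ² → ℝ that is continuously differentiable in the first variable and three times continuously differentiable in the second variable (with all these partial derivatives continuous) and a Lipschitz function k : [0,1] → ℝ such that y_t = f(k_t,g_t) for all t ∈ [0,1]. -/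
/-- The Russo–Vallois symmetric integral `∫₀ᵗ f dᵒg = I`. -/
def HasSymmInt (f g : ℝ → ℝ) (t : ℝ) (I : ℝ) : Prop :=
  Filter.Tendsto
    (fun ε : ℝ =>
      ∫ u in (0:ℝ)..t, ((f (min (u + ε) t) + f u) / 2) * ((g (min (u + ε) t) - g u) / ε))
    (nhdsWithin 0 (Set.Ioi 0)) (nhds I)

/-- `f` is in `C_b^n(ℝ;ℝ)`: `n`-times continuously differentiable, bounded together with all
its derivatives. -/
def CbN (n : ℕ) (f : ℝ → ℝ) : Prop :=
  ContDiff ℝ n f ∧ ∀ i ≤ n, ∃ M : ℝ, ∀ x : ℝ, |iteratedDeriv i f x| ≤ M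

/-- `f ∈ C^{1,3}(ℝ²;ℝ)`: continuously differentiable in the first variable, three times
continuously differentiable in the second, with all these partial derivatives continuous. -/
def IsC13 (f : ℝ → ℝ → ℝ) : Prop :=
  (∀ y : ℝ, Differentiable ℝ (fun x => f x y)) ∧
  (∀ x : ℝ, ContDiff ℝ 3 (f x)) ∧
  Continuous (fun p : ℝ × ℝ => f p.1 p.2) ∧
  Continuous (fun p : ℝ × ℝ => deriv (fun x => f x p.2) p.1) ∧
  Continuous (fun p : ℝ × ℝ => deriv (f p.1) p.2) ∧
  Continuous (fun p : ℝ × ℝ => deriv (deriv (f p.1)) p.2) ∧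
  Continuous (fun p : ℝ × ℝ => deriv (deriv (deriv (f p.1))) p.2)

/-- Membership in the class `𝔠` of solutions: `λ`-Hölder on `[0,1]` and of the form
`y_t = f(k_t, g_t)` with `f ∈ C^{1,3}` and `k` Lipschitz. -/
def InClassC (lam : ℝ) (g y : ℝ → ℝ) : Prop :=
  (∃ Cy : ℝ, ∀ s ∈ Set.Icc (0:ℝ) 1, ∀ t ∈ Set.Icc (0:ℝ) 1, |y t - y s| ≤ Cy * |t - s| ^ lam) ∧
  ∃ f : ℝ → ℝ → ℝ, ∃ k : ℝ → ℝ, ∃ K : NNReal,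
    IsC13 f ∧ LipschitzOnWith K k (Set.Icc 0 1) ∧ ∀ t ∈ Set.Icc (0:ℝ) 1, y t = f (k t) (g t)

/-- `f_{σ,b}(x,y) = exp(−∫₀^y σ'(φ(x,η))dη) · b(φ(x,y))`. -/
noncomputable def fsb (b σ : ℝ → ℝ) (φ : ℝ → ℝ → ℝ) (x y : ℝ) : ℝ :=
  Real.exp (-(∫ η in (0:ℝ)..y, deriv σ (φ x η))) * b (φ x y)

/-!
For `F` of class `C^{1,3}`, `k` Lipschitz and `g` Hölder of exponent `r > 1/3`, one has the
Itô-type formula `F(k_t, g_t) = F(k_0, g_0) + ∫₀ᵗ ∂ₓF(k, g) dk + ∫₀ᵗ ∂_yF(k, g) dᵒg`. Indeed the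
trapezoidal rule replaces the symmetric difference by an increment of `F` up to
`O(|Δg|³ + |Δk|^{2/3} |Δg|)`, because `∂_yF` is `2/3`-Hölder in `x` by interpolation between `F` and
its third `y`-derivative; the error is `o(ε)` when `r > 1/3`.

Applied to the flow `φ` of `σ`, whose `x`-derivative is `exp (∫₀^y σ'(φ(x, η)) dη)`, the formula
turns the equation for `φ(a_t, g_t)` into `a' = f_{σ,b}(a, g)`. For uniqueness, a solution
`y = F(k, g)` has pull-back `z = φ(y, -g)`, a `C^{1,3}` function of `(k, g)`, which has to be shown
Lipschitz before the formula can be applied to `y = φ(z, g)`. The equation says that `D(k, g)` is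
Lipschitz for `D(x, y) = F(x, y) - ∫₀^y σ(F(x, η)) dη`, and `∂_y[φ(F(x, y), -y)]` is a `C¹`
multiple of `∂_yD`, so integration by parts in `y` carries the Lipschitz bound from `D(k, g)` over
to `z`.
-/

open Set Filter Topology MeasureTheory intervalIntegral
open scoped NNReal

section Calculus

variable {F F₁ : ℝ → ℝ → ℝ}

lemma exists_lipschitzOnWith_left (hF : ∀ x y, HasDerivAt (F · y) (F₁ x y) x)
    (hF₁ : Continuous fun p : ℝ × ℝ => F₁ p.1 p.2) {s t : Set ℝ} (hs : IsCompact s)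
    (hs' : Convex ℝ s) (ht : IsCompact t) :
    ∃ L : ℝ≥0, ∀ y ∈ t, LipschitzOnWith L (F · y) s := by
  obtain ⟨B, hB⟩ := (hs.prod ht).exists_bound_of_continuousOn hF₁.continuousOn
  refine ⟨B.toNNReal, fun y hy => hs'.lipschitzOnWith_of_nnnorm_hasDerivWithin_le
    (fun x _ => (hF x y).hasDerivWithinAt) fun x hx => ?_⟩
  exact NNReal.coe_le_coe.1 ((hB (x, y) ⟨hx, hy⟩).trans B.le_coe_toNNReal)

lemma hasDerivAt_comp_of_continuous_partials {F₂ : ℝ → ℝ → ℝ}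
    (hF : ∀ x y, HasDerivAt (F · y) (F₁ x y) x) (hF' : ∀ x y, HasDerivAt (F x) (F₂ x y) y)
    (hF₁ : Continuous fun p : ℝ × ℝ => F₁ p.1 p.2) (hF₂ : Continuous fun p : ℝ × ℝ => F₂ p.1 p.2)
    {u v : ℝ → ℝ} {u' v' t : ℝ} (hu : HasDerivAt u u' t) (hv : HasDerivAt v v' t) :
    HasDerivAt (fun t => F (u t) (v t)) (F₁ (u t) (v t) * u' + F₂ (u t) (v t) * v') t := by
  have hspan : Continuous (ContinuousLinearMap.toSpanSingleton ℝ : ℝ → ℝ →L[ℝ] ℝ) :=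
    (ContinuousLinearMap.toSpanSingletonCLE (𝕜 := ℝ) (E := ℝ)).continuous
  have hfd := hasStrictFDerivAt_uncurry_coprod (u := (u t, v t)) (f := F)
    (f₁ := fun x y => .toSpanSingleton ℝ (F₁ x y)) (f₂ := fun x y => .toSpanSingleton ℝ (F₂ x y))
    (.of_forall fun p => (hF p.1 p.2).hasFDerivAt) (.of_forall fun p => (hF' p.1 p.2).hasFDerivAt)
    (hspan.comp hF₁).continuousAt (hspan.comp hF₂).continuousAt
  refine (hfd.hasFDerivAt.comp_hasDerivAt t (hu.prodMk hv)).congr_deriv ?_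
  simp [Function.HasUncurry.uncurry, mul_comm]

/-- The mean `∫₀¹ f (x + θ (y - x)) dθ` of `f` over the segment from `x` to `y`: applied to the
derivative of a function, it represents the difference quotient of that function by an expression
which is still defined, and continuous, at `x = y`. -/
noncomputable def segmentMean (f : ℝ → ℝ) (x y : ℝ) : ℝ :=
  ∫ θ in (0 : ℝ)..1, f (x + θ * (y - x))

lemma segmentMean_self (f : ℝ → ℝ) (x : ℝ) : segmentMean f x x = f x := by
  simp [segmentMean]

lemma continuous_segmentMean (hF : Continuous fun p : ℝ × ℝ => F p.1 p.2) :
    Continuous fun p : (ℝ × ℝ) × ℝ => segmentMean (F · p.2) p.1.1 p.1.2 := by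
  unfold segmentMean
  exact continuous_parametric_intervalIntegral_of_continuous' (by fun_prop) 0 1

lemma sub_eq_segmentMean_mul {f f' : ℝ → ℝ} (hf : ∀ x, HasDerivAt f (f' x) x)
    (hf' : Continuous f') (x y : ℝ) : f y - f x = segmentMean f' x y * (y - x) := by
  have := integral_unitInterval_deriv_eq_sub (𝕜 := ℝ) (z₀ := x) (z₁ := y - x) (f := f) (f' := f')
    (by fun_prop) (fun t _ => hf _)
  simpa [segmentMean, mul_comm] using this.symm

lemma hasDerivAt_integral_left (hF : ∀ x y, HasDerivAt (F · y) (F₁ x y) x)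
    (hFc : Continuous fun p : ℝ × ℝ => F p.1 p.2) (hF₁ : Continuous fun p : ℝ × ℝ => F₁ p.1 p.2)
    (a b x : ℝ) : HasDerivAt (fun x => ∫ η in a..b, F x η) (∫ η in a..b, F₁ x η) x := by
  obtain ⟨L, hL⟩ := exists_lipschitzOnWith_left hF hF₁
    (isCompact_closedBall x 1) (convex_closedBall x 1) (isCompact_uIcc (a := a) (b := b))
  refine (hasDerivAt_integral_of_dominated_loc_of_lip (bound := fun _ => (L : ℝ))
    (Metric.closedBall_mem_nhds x one_pos)
    (.of_forall fun z => (by fun_prop : Continuous (F z)).aestronglyMeasurable)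
    ((by fun_prop : Continuous (F x)).intervalIntegrable a b)
    (by fun_prop : Continuous (F₁ x)).aestronglyMeasurable
    (.of_forall fun η hη => ?_) intervalIntegrable_const (.of_forall fun η _ => hF x η)).2
  simpa using hL η (uIoc_subset_uIcc hη)

end Calculus

section Taylor

variable {Q Q₁ Q₂ Q₃ : ℝ → ℝ} {A B x y h : ℝ}

lemma abs_sub_le_mul_of_hasDerivAt (hQ : ∀ w, HasDerivAt Q (Q₁ w) w)
    (hB : ∀ w ∈ uIcc x y, |Q₁ w| ≤ B) : |Q y - Q x| ≤ B * |y - x| :=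
  (convex_uIcc x y).norm_image_sub_le_of_norm_hasDerivWithin_le
    (fun w _ => (hQ w).hasDerivWithinAt) hB left_mem_uIcc right_mem_uIcc

lemma abs_sub_taylor_one_le (hQ : ∀ w, HasDerivAt Q (Q₁ w) w)
    (hQ₁ : ∀ w, HasDerivAt Q₁ (Q₂ w) w) (hB : ∀ w ∈ uIcc x y, |Q₂ w| ≤ B) :
    |Q y - Q x - Q₁ x * (y - x)| ≤ B * |y - x| ^ 2 := by
  have hB0 : 0 ≤ B := (abs_nonneg _).trans (hB x left_mem_uIcc)
  have hderiv : ∀ w ∈ uIcc x y, |Q₁ w - Q₁ x| ≤ B * |y - x| := fun w hw =>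
    (abs_sub_le_mul_of_hasDerivAt hQ₁ fun v hv => hB v (uIcc_subset_uIcc_left hw hv)).trans
      (mul_le_mul_of_nonneg_left (abs_sub_left_of_mem_uIcc hw) hB0)
  have := abs_sub_le_mul_of_hasDerivAt (Q := fun w => Q w - Q₁ x * (w - x)) (fun w =>
    ((hQ w).sub (((hasDerivAt_id w).sub_const x).const_mul (Q₁ x))).congr_deriv (by simp)) hderiv
  simpa [sub_right_comm, sq, mul_assoc] using this

lemma abs_sub_taylor_two_le (hQ : ∀ w, HasDerivAt Q (Q₁ w) w)
    (hQ₁ : ∀ w, HasDerivAt Q₁ (Q₂ w) w) (hQ₂ : ∀ w, HasDerivAt Q₂ (Q₃ w) w)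
    (hB : ∀ w ∈ uIcc x y, |Q₃ w| ≤ B) :
    |Q y - Q x - Q₁ x * (y - x) - Q₂ x * (y - x) ^ 2 / 2| ≤ B * |y - x| ^ 3 := by
  have hB0 : 0 ≤ B := (abs_nonneg _).trans (hB x left_mem_uIcc)
  have hderiv : ∀ w ∈ uIcc x y, |Q₁ w - Q₁ x - Q₂ x * (w - x)| ≤ B * |y - x| ^ 2 := fun w hw =>
    (abs_sub_taylor_one_le hQ₁ hQ₂ fun v hv => hB v (uIcc_subset_uIcc_left hw hv)).trans <| by
      have := abs_sub_left_of_mem_uIcc hw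
      gcongr
  have := abs_sub_le_mul_of_hasDerivAt
    (Q := fun w => Q w - Q₁ x * (w - x) - Q₂ x * (w - x) ^ 2 / 2) (fun w => by
      have hw := (hasDerivAt_id w).sub_const x
      refine (((hQ w).sub (hw.const_mul (Q₁ x))).sub
        (((hw.pow 2).const_mul (Q₂ x)).div_const 2)).congr_deriv ?_
      simp only [id]; ring) hderiv
  simpa [sub_right_comm _ (Q x), pow_succ, mul_assoc] using this

lemma abs_trapezoid_sub_le (hQ : ∀ w, HasDerivAt Q (Q₁ w) w)
    (hQ₁ : ∀ w, HasDerivAt Q₁ (Q₂ w) w) (hQ₂ : ∀ w, HasDerivAt Q₂ (Q₃ w) w)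
    (hB : ∀ w ∈ uIcc x y, |Q₃ w| ≤ B) :
    |(Q₁ x + Q₁ y) / 2 * (y - x) - (Q y - Q x)| ≤ 2 * B * |y - x| ^ 3 := by
  calc |(Q₁ x + Q₁ y) / 2 * (y - x) - (Q y - Q x)|
      = |(Q₁ y - Q₁ x - Q₂ x * (y - x)) * ((y - x) / 2)
          - (Q y - Q x - Q₁ x * (y - x) - Q₂ x * (y - x) ^ 2 / 2)| := by congr 1; ring
    _ ≤ B * |y - x| ^ 2 * (|y - x| / 2) + B * |y - x| ^ 3 := by
        refine (abs_sub _ _).trans (add_le_add ?_ (abs_sub_taylor_two_le hQ hQ₁ hQ₂ hB))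
        rw [abs_mul, abs_div, abs_two]
        gcongr
        exact abs_sub_taylor_one_le hQ₁ hQ₂ hB
    _ ≤ 2 * B * |y - x| ^ 3 := by
        have hB0 : 0 ≤ B := (abs_nonneg _).trans (hB x left_mem_uIcc)
        have : 0 ≤ B * |y - x| ^ 3 := by positivity
        linarith

lemma mul_abs_deriv_le_of_abs_le (hQ : ∀ w, HasDerivAt Q (Q₁ w) w)
    (hQ₁ : ∀ w, HasDerivAt Q₁ (Q₂ w) w) (hQ₂ : ∀ w, HasDerivAt Q₂ (Q₃ w) w) (hh : 0 ≤ h)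
    (hA : ∀ w ∈ Icc (x - h) (x + h), |Q w| ≤ A) (hB : ∀ w ∈ Icc (x - h) (x + h), |Q₃ w| ≤ B) :
    h * |Q₁ x| ≤ A + B * h ^ 3 := by
  have hplus := abs_sub_taylor_two_le (x := x) (y := x + h) hQ hQ₁ hQ₂ fun w hw =>
    hB w (uIcc_subset_Icc ⟨by linarith, by linarith⟩ ⟨by linarith, by linarith⟩ hw)
  have hminus := abs_sub_taylor_two_le (x := x) (y := x - h) hQ hQ₁ hQ₂ fun w hw =>
    hB w (uIcc_subset_Icc ⟨by linarith, by linarith⟩ ⟨by linarith, by linarith⟩ hw)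
  have hAplus := hA (x + h) ⟨by linarith, le_rfl⟩
  have hAminus := hA (x - h) ⟨le_rfl, by linarith⟩
  rw [add_sub_cancel_left, abs_of_nonneg hh] at hplus
  rw [sub_sub_cancel_left, abs_neg, abs_of_nonneg hh] at hminus
  rw [← abs_of_nonneg hh, ← abs_mul, abs_of_nonneg hh]
  rw [abs_le] at *
  constructor <;> nlinarith

end Taylor

lemma holderOnWith_of_dist_le {X Y : Type*} [PseudoMetricSpace X] [PseudoMetricSpace Y]
    {f : X → Y} {s : Set X} {C r : ℝ≥0}
    (h : ∀ x ∈ s, ∀ y ∈ s, dist (f x) (f y) ≤ C * dist x y ^ (r : ℝ)) : HolderOnWith C r f s := by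
  intro x hx y hy
  rw [edist_dist, edist_dist, ENNReal.ofReal_rpow_of_nonneg dist_nonneg r.coe_nonneg,
    ← ENNReal.ofReal_coe_nnreal, ← ENNReal.ofReal_mul C.coe_nonneg]
  exact ENNReal.ofReal_le_ofReal (h x hx y hy)

lemma convex_image_Icc {k : ℝ → ℝ} {a b : ℝ} (hk : ContinuousOn k (Icc a b)) :
    Convex ℝ (k '' Icc a b) :=
  (isPreconnected_Icc.image k hk).ordConnected.convex

namespace IsC13

variable {F : ℝ → ℝ → ℝ}

lemma hasDerivAt_left (hF : IsC13 F) (x y : ℝ) : HasDerivAt (F · y) (deriv (F · y) x) x :=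
  (hF.1 y x).hasDerivAt

lemma contDiff_right (hF : IsC13 F) (x : ℝ) : ContDiff ℝ 3 (F x) := hF.2.1 x

lemma contDiff_deriv_right (hF : IsC13 F) (x : ℝ) : ContDiff ℝ 2 (deriv (F x)) :=
  ((contDiff_succ_iff_deriv (n := 2)).1 (hF.contDiff_right x)).2.2

lemma hasDerivAt_right (hF : IsC13 F) (x y : ℝ) : HasDerivAt (F x) (deriv (F x) y) y :=
  ((hF.contDiff_right x).differentiable (by norm_num) y).hasDerivAt

lemma hasDerivAt_deriv_right (hF : IsC13 F) (x y : ℝ) :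
    HasDerivAt (deriv (F x)) (deriv (deriv (F x)) y) y :=
  ((hF.contDiff_deriv_right x).differentiable (by norm_num) y).hasDerivAt

lemma hasDerivAt_deriv_deriv_right (hF : IsC13 F) (x y : ℝ) :
    HasDerivAt (deriv (deriv (F x))) (deriv (deriv (deriv (F x))) y) y :=
  ((((contDiff_succ_iff_deriv (n := 1)).1 (hF.contDiff_deriv_right x)).2.2).differentiable
    (by norm_num) y).hasDerivAt

lemma continuous (hF : IsC13 F) : Continuous fun p : ℝ × ℝ => F p.1 p.2 := hF.2.2.1

lemma continuous_deriv_left (hF : IsC13 F) :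
    Continuous fun p : ℝ × ℝ => deriv (F · p.2) p.1 := hF.2.2.2.1

lemma continuous_deriv_right (hF : IsC13 F) :
    Continuous fun p : ℝ × ℝ => deriv (F p.1) p.2 := hF.2.2.2.2.1

lemma continuous_deriv_deriv_right (hF : IsC13 F) :
    Continuous fun p : ℝ × ℝ => deriv (deriv (F p.1)) p.2 := hF.2.2.2.2.2.1

lemma continuous_deriv_deriv_deriv_right (hF : IsC13 F) :
    Continuous fun p : ℝ × ℝ => deriv (deriv (deriv (F p.1))) p.2 := hF.2.2.2.2.2.2

-- Interpolation: `F x' - F x` is `O(|x' - x|)` with bounded third derivative in `y`, and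
-- differencing over the step `h = |x' - x| ^ (1/3)` balances the two errors.
lemma exists_holderOnWith_deriv_right (hF : IsC13 F) {s t : Set ℝ} (hs : IsCompact s)
    (hs' : Convex ℝ s) (ht : IsCompact t) :
    ∃ C : ℝ≥0, ∀ y ∈ t, HolderOnWith C (2 / 3) (fun x => deriv (F x) y) s := by
  set δ := Metric.diam s ^ (1 / 3 : ℝ)
  have ht' : IsCompact (Metric.cthickening δ t) := ht.cthickening
  obtain ⟨L, hL⟩ := exists_lipschitzOnWith_left hF.hasDerivAt_left hF.continuous_deriv_left
    hs hs' ht'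
  obtain ⟨B, hB⟩ := (hs.prod ht').exists_bound_of_continuousOn
    hF.continuous_deriv_deriv_deriv_right.continuousOn
  refine ⟨L + 2 * B.toNNReal, fun y hy => holderOnWith_of_dist_le fun x' hx' x hx => ?_⟩
  obtain rfl | hne := eq_or_ne x' x
  · simp
  set h := dist x' x ^ (1 / 3 : ℝ)
  have hh : 0 < h := Real.rpow_pos_of_pos (dist_pos.2 hne) _
  have hh3 : h ^ 3 = dist x' x := by
    rw [← Real.rpow_natCast, ← Real.rpow_mul dist_nonneg]; norm_num
  have hh2 : dist x' x ^ ((2 / 3 : ℝ≥0) : ℝ) = h ^ 2 := by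
    rw [← Real.rpow_natCast, ← Real.rpow_mul dist_nonneg]; norm_num
  have hmem : ∀ w ∈ Icc (y - h) (y + h), w ∈ Metric.cthickening δ t := fun w hw =>
    Metric.closedBall_subset_cthickening hy δ <| Metric.closedBall_subset_closedBall
      (Real.rpow_le_rpow dist_nonneg (Metric.dist_le_diam_of_mem hs.isBounded hx' hx)
        (by norm_num)) (Real.closedBall_eq_Icc ▸ hw)
  have hinterp := mul_abs_deriv_le_of_abs_le (Q := fun w => F x' w - F x w)
    (A := L * h ^ 3) (B := 2 * B.toNNReal)
    (fun w => (hF.hasDerivAt_right x' w).sub (hF.hasDerivAt_right x w))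
    (fun w => (hF.hasDerivAt_deriv_right x' w).sub (hF.hasDerivAt_deriv_right x w))
    (fun w => (hF.hasDerivAt_deriv_deriv_right x' w).sub (hF.hasDerivAt_deriv_deriv_right x w))
    hh.le (fun w hw => hh3 ▸ (hL w (hmem w hw)).dist_le_mul x' hx' x hx) fun w hw => by
      have h1 := (hB (x', w) ⟨hx', hmem w hw⟩).trans B.le_coe_toNNReal
      have h2 := (hB (x, w) ⟨hx, hmem w hw⟩).trans B.le_coe_toNNReal
      exact (abs_sub _ _).trans ((add_le_add h1 h2).trans_eq (two_mul _).symm)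
  rw [hh2, Real.dist_eq, ← mul_le_mul_iff_right₀ hh]
  exact hinterp.trans_eq (by push_cast; ring)

lemma exists_abs_trapezoid_sub_le (hF : IsC13 F) {s t : Set ℝ} (hs : IsCompact s)
    (hs' : Convex ℝ s) (ht : IsCompact t) (ht' : Convex ℝ t) :
    ∃ D : ℝ≥0, ∀ x ∈ s, ∀ x' ∈ s, ∀ y ∈ t, ∀ y' ∈ t,
      |(deriv (F x') y' + deriv (F x) y) / 2 * (y' - y) - (F x y' - F x y)|
        ≤ D * (|y' - y| ^ 3 + |x' - x| ^ (2 / 3 : ℝ) * |y' - y|) := by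
  obtain ⟨B, hB⟩ := (hs.prod ht).exists_bound_of_continuousOn
    hF.continuous_deriv_deriv_deriv_right.continuousOn
  obtain ⟨C, hC⟩ := hF.exists_holderOnWith_deriv_right hs hs' ht
  refine ⟨2 * B.toNNReal + C, fun x hx x' hx' y hy y' hy' => ?_⟩
  have htrap := abs_trapezoid_sub_le (B := B.toNNReal) (x := y) (y := y') (hF.hasDerivAt_right x)
    (hF.hasDerivAt_deriv_right x) (hF.hasDerivAt_deriv_deriv_right x) fun w hw =>
      (hB (x, w) ⟨hx, ht'.ordConnected.uIcc_subset hy hy' hw⟩).trans B.le_coe_toNNReal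
  have hholder : |deriv (F x') y' - deriv (F x) y'| ≤ C * |x' - x| ^ (2 / 3 : ℝ) := by
    simpa [Real.dist_eq] using (hC y' hy').dist_le hx' hx
  calc |(deriv (F x') y' + deriv (F x) y) / 2 * (y' - y) - (F x y' - F x y)|
      = |((deriv (F x) y + deriv (F x) y') / 2 * (y' - y) - (F x y' - F x y))
          + (deriv (F x') y' - deriv (F x) y') * (y' - y) / 2| := by congr 1; ring
    _ ≤ 2 * B.toNNReal * |y' - y| ^ 3 + C * |x' - x| ^ (2 / 3 : ℝ) * |y' - y| / 2 := by
        refine (abs_add_le _ _).trans (add_le_add htrap ?_)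
        rw [abs_div, abs_mul, abs_two]
        gcongr
    _ ≤ _ := by
        have h1 : 0 ≤ C * |y' - y| ^ 3 := by positivity
        have h3 : 0 ≤ C * (|x' - x| ^ (2 / 3 : ℝ) * |y' - y|) := by positivity
        have h4 : 0 ≤ B.toNNReal * (|x' - x| ^ (2 / 3 : ℝ) * |y' - y|) := by positivity
        push_cast
        linarith

end IsC13

section ChangeOfVariables

variable {F F₁ : ℝ → ℝ → ℝ} {X k g : ℝ → ℝ} {K C r : ℝ≥0} {t : ℝ}

lemma tendsto_integral_diffQuotient (hX : Continuous X) (t : ℝ) :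
    Tendsto (fun ε => ∫ u in (0 : ℝ)..t, (X (u + ε) - X u) / ε) (𝓝[≠] 0) (𝓝 (X t - X 0)) := by
  have hderiv : HasDerivAt (fun ε => (∫ u in (0 : ℝ)..(t + ε), X u) - ∫ u in (0 : ℝ)..ε, X u)
      (X t - X 0) 0 := by
    refine HasDerivAt.sub ?_ (hX.integral_hasStrictDerivAt 0 0).hasDerivAt
    simpa using (hX.integral_hasStrictDerivAt 0 (t + 0)).hasDerivAt.comp_const_add t 0
  refine (hasDerivAt_iff_tendsto_slope.1 hderiv).congr fun ε => ?_
  have hint : ∀ c d, IntervalIntegrable X volume c d := fun c d => hX.intervalIntegrable c d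
  have hint' : IntervalIntegrable (fun u => X (u + ε)) volume 0 t :=
    Continuous.intervalIntegrable (by fun_prop) _ _
  have hadj := integral_add_adjacent_intervals (hint 0 ε) (hint ε (t + ε))
  rw [slope_def_field, intervalIntegral.integral_div, integral_sub hint' (hint _ _),
    integral_comp_add_right]
  simp only [add_zero, integral_same, sub_zero, zero_add]
  congr 1
  linarith

lemma tendsto_integral_left_diffQuotient (hF : ∀ x y, HasDerivAt (F · y) (F₁ x y) x)
    (hFc : Continuous fun p : ℝ × ℝ => F p.1 p.2) (hF₁ : Continuous fun p : ℝ × ℝ => F₁ p.1 p.2)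
    (hk : LipschitzWith K k) (hg : Continuous g) (t : ℝ) :
    Tendsto (fun ε => ∫ u in (0 : ℝ)..t, (F (k (u + ε)) (g (u + ε)) - F (k u) (g (u + ε))) / ε)
      (𝓝[>] 0) (𝓝 (∫ u in (0 : ℝ)..t, F₁ (k u) (g u) * deriv k u)) := by
  have hkc := hk.continuous
  have hmean : Continuous fun p : ℝ × ℝ =>
      segmentMean (F₁ · (g (p.2 + p.1))) (k p.2) (k (p.2 + p.1)) :=
    (continuous_segmentMean hF₁).comp
      (by fun_prop : Continuous fun p : ℝ × ℝ => ((k p.2, k (p.2 + p.1)), g (p.2 + p.1)))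
  have hquot : ∀ ε u, (F (k (u + ε)) (g (u + ε)) - F (k u) (g (u + ε))) / ε =
      segmentMean (F₁ · (g (u + ε))) (k u) (k (u + ε)) * ((k (u + ε) - k u) / ε) := fun ε u => by
    rw [sub_eq_segmentMean_mul (hF · (g (u + ε))) (by fun_prop), mul_div_assoc]
  obtain ⟨B, hB⟩ := ((isCompact_Icc (a := (0 : ℝ)) (b := 1)).prod
    (isCompact_uIcc (a := 0) (b := t))).exists_bound_of_continuousOn hmean.continuousOn
  refine intervalIntegral.tendsto_integral_filter_of_dominated_convergence (fun _ => B * K)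
    (.of_forall fun ε => Continuous.aestronglyMeasurable (by fun_prop)) ?_
    intervalIntegrable_const ?_
  · filter_upwards [Ioc_mem_nhdsGT one_pos] with ε hε
    refine .of_forall fun u hu => ?_
    have hbound := hB (ε, u) ⟨⟨hε.1.le, hε.2⟩, uIoc_subset_uIcc hu⟩
    have hslope : ‖(k (u + ε) - k u) / ε‖ ≤ K := by
      rw [norm_div, div_le_iff₀ (norm_pos_iff.2 hε.1.ne')]
      simpa [Real.dist_eq] using hk.dist_le_mul (u + ε) u
    have := (norm_nonneg _).trans hbound
    rw [hquot, norm_mul]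
    gcongr
  · filter_upwards [hk.ae_differentiableAt_real] with u hu _
    simp only [hquot]
    refine Tendsto.mul ?_ (by simpa [div_eq_inv_mul] using hu.hasDerivAt.tendsto_slope_zero_right)
    have := (hmean.comp (by fun_prop : Continuous fun ε : ℝ => (ε, u))).tendsto 0
    simpa [Function.comp_def, segmentMean_self] using
      this.mono_left (nhdsWithin_le_nhds (s := Ioi 0))

namespace IsC13

lemma exists_abs_symmQuotient_sub_le (hF : IsC13 F) (hk : LipschitzWith K k)
    (hg : HolderWith C r g) (hr : 0 < r) (t : ℝ) :
    ∃ D : ℝ, ∀ u ∈ Icc 0 t, ∀ ε ∈ Ioc (0 : ℝ) 1,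
      |(deriv (F (k (u + ε))) (g (u + ε)) + deriv (F (k u)) (g u)) / 2 * ((g (u + ε) - g u) / ε)
          - (F (k u) (g (u + ε)) - F (k u) (g u)) / ε|
        ≤ D * (ε ^ (3 * r - 1 : ℝ) + ε ^ (r - 1 / 3 : ℝ)) := by
  have hkc := hk.continuous.continuousOn (s := Icc 0 (t + 1))
  have hgc := (hg.continuous hr).continuousOn (s := Icc 0 (t + 1))
  obtain ⟨D, hD⟩ := hF.exists_abs_trapezoid_sub_le (isCompact_Icc.image_of_continuousOn hkc)
    (convex_image_Icc hkc) (isCompact_Icc.image_of_continuousOn hgc) (convex_image_Icc hgc)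
  refine ⟨D * (C ^ 3 + K ^ (2 / 3 : ℝ) * C), fun u hu ε hε => ?_⟩
  have hε0 : 0 < ε := hε.1
  have hu1 : u ∈ Icc 0 (t + 1) := ⟨hu.1, by linarith [hu.2]⟩
  have hu2 : u + ε ∈ Icc 0 (t + 1) := ⟨by linarith [hu.1], by linarith [hu.2, hε.2]⟩
  have hΔg : |g (u + ε) - g u| ≤ C * ε ^ (r : ℝ) := by
    simpa [Real.dist_eq, abs_of_pos hε0] using hg.dist_le (u + ε) u
  have hΔk : |k (u + ε) - k u| ≤ K * ε := by
    simpa [Real.dist_eq, abs_of_pos hε0] using hk.dist_le_mul (u + ε) u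
  have hε3 : (ε ^ (r : ℝ)) ^ 3 = ε ^ (3 * r - 1 : ℝ) * ε := by
    rw [← Real.rpow_add_one hε0.ne', ← Real.rpow_natCast, ← Real.rpow_mul hε0.le]
    congr 1; push_cast; ring
  have hε2 : ε ^ (2 / 3 : ℝ) * ε ^ (r : ℝ) = ε ^ (r - 1 / 3 : ℝ) * ε := by
    rw [← Real.rpow_add_one hε0.ne', ← Real.rpow_add hε0]
    congr 1; ring
  rw [← mul_div_assoc, ← sub_div, abs_div, abs_of_pos hε0, div_le_iff₀ hε0]
  calc _ ≤ D * (|g (u + ε) - g u| ^ 3 + |k (u + ε) - k u| ^ (2 / 3 : ℝ) * |g (u + ε) - g u|) :=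
        hD _ (mem_image_of_mem k hu1) _ (mem_image_of_mem k hu2)
          _ (mem_image_of_mem g hu1) _ (mem_image_of_mem g hu2)
    _ ≤ D * ((C * ε ^ (r : ℝ)) ^ 3 + (K * ε) ^ (2 / 3 : ℝ) * (C * ε ^ (r : ℝ))) := by gcongr
    _ = D * (C ^ 3 * (ε ^ (3 * r - 1 : ℝ) * ε)
          + K ^ (2 / 3 : ℝ) * C * (ε ^ (r - 1 / 3 : ℝ) * ε)) := by
        rw [Real.mul_rpow K.coe_nonneg hε0.le, ← hε3, ← hε2]; ring
    _ ≤ D * ((C ^ 3 + K ^ (2 / 3 : ℝ) * C) * (ε ^ (3 * r - 1 : ℝ) * ε)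
          + (C ^ 3 + K ^ (2 / 3 : ℝ) * C) * (ε ^ (r - 1 / 3 : ℝ) * ε)) := by
        gcongr
        · exact le_add_of_nonneg_right (by positivity)
        · exact le_add_of_nonneg_left (by positivity)
    _ = _ := by ring

lemma tendsto_integral_symmQuotient_sub (hF : IsC13 F) (hk : LipschitzWith K k)
    (hg : HolderWith C r g) (hr : 1 / 3 < r) (ht : 0 ≤ t) :
    Tendsto (fun ε => ∫ u in (0 : ℝ)..t,
        ((deriv (F (k (u + ε))) (g (u + ε)) + deriv (F (k u)) (g u)) / 2 * ((g (u + ε) - g u) / ε)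
          - (F (k u) (g (u + ε)) - F (k u) (g u)) / ε))
      (𝓝[>] 0) (𝓝 0) := by
  have hr' : (1 / 3 : ℝ) < r := by exact_mod_cast hr
  have hpow : ∀ {s : ℝ}, 0 < s → Tendsto (fun ε : ℝ => ε ^ s) (𝓝[>] 0) (𝓝 0) := fun {s} hs => by
    have := (Real.continuousAt_rpow_const 0 s (.inr hs.le)).tendsto
    simpa [Real.zero_rpow hs.ne'] using this.mono_left (nhdsWithin_le_nhds (s := Ioi 0))
  obtain ⟨D, hD⟩ := hF.exists_abs_symmQuotient_sub_le hk hg (pos_of_gt hr) t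
  have hlim : Tendsto (fun ε : ℝ => D * (ε ^ (3 * r - 1 : ℝ) + ε ^ (r - 1 / 3 : ℝ)) * |t - 0|)
      (𝓝[>] 0) (𝓝 0) := by
    simpa using (((hpow (by linarith : (0 : ℝ) < 3 * r - 1)).add
      (hpow (sub_pos.2 hr'))).const_mul D).mul_const |t - 0|
  refine squeeze_zero_norm' ?_ hlim
  filter_upwards [Ioc_mem_nhdsGT one_pos] with ε hε
  refine norm_integral_le_of_norm_le_const fun u hu => hD u ?_ ε hε
  rw [uIoc_of_le ht] at hu
  exact Ioc_subset_Icc_self hu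

lemma tendsto_integral_symmQuotient (hF : IsC13 F) (hk : LipschitzWith K k)
    (hg : HolderWith C r g) (hr : 1 / 3 < r) (ht : 0 ≤ t) :
    Tendsto (fun ε => ∫ u in (0 : ℝ)..t,
        (deriv (F (k (u + ε))) (g (u + ε)) + deriv (F (k u)) (g u)) / 2 * ((g (u + ε) - g u) / ε))
      (𝓝[>] 0) (𝓝 (F (k t) (g t) - F (k 0) (g 0)
        - ∫ u in (0 : ℝ)..t, deriv (F · (g u)) (k u) * deriv k u)) := by
  have hkc := hk.continuous
  have hgc := hg.continuous (pos_of_gt hr)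
  have hFc := hF.continuous
  have hFc' : ∀ ε, Continuous fun u => deriv (F (k (u + ε))) (g (u + ε)) := fun ε =>
    hF.continuous_deriv_right.comp
      (by fun_prop : Continuous fun u => (k (u + ε), g (u + ε)))
  have hFc'' : Continuous fun u => deriv (F (k u)) (g u) := by simpa using hFc' 0
  have htotal := (tendsto_integral_diffQuotient (X := fun u => F (k u) (g u))
    (by fun_prop) t).mono_left (nhdsGT_le_nhdsNE 0)
  have hleft := tendsto_integral_left_diffQuotient hF.hasDerivAt_left hFc hF.continuous_deriv_left
    hk hgc t
  have hright := hF.tendsto_integral_symmQuotient_sub hk hg hr ht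
  have hsum := (htotal.sub hleft).add hright
  rw [add_zero] at hsum
  refine hsum.congr fun ε => ?_
  rw [← intervalIntegral.integral_sub, ← intervalIntegral.integral_add]
  · exact integral_congr fun u _ => by ring
  all_goals exact Continuous.intervalIntegrable (by fun_prop) _ _

end IsC13

end ChangeOfVariables

section SymmetricIntegral

variable {F : ℝ → ℝ → ℝ} {f₁ f₂ k g : ℝ → ℝ} {K C r : ℝ≥0} {t I : ℝ}

lemma HasSymmInt.congr (h : HasSymmInt f₁ g t I) (ht : 0 ≤ t) (hf : EqOn f₁ f₂ (Icc 0 t)) :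
    HasSymmInt f₂ g t I := by
  refine Tendsto.congr' ?_ h
  filter_upwards [self_mem_nhdsWithin] with ε hε
  refine integral_congr fun u hu => ?_
  rw [uIcc_of_le ht] at hu
  have hmin : min (u + ε) t ∈ Icc 0 t :=
    ⟨le_min (add_nonneg hu.1 (le_of_lt hε)) ht, min_le_right _ _⟩
  simp only [hf hmin, hf hu]

lemma HasSymmInt.unique {I₁ I₂ : ℝ} (h₁ : HasSymmInt f₁ g t I₁) (h₂ : HasSymmInt f₁ g t I₂) :
    I₁ = I₂ :=
  tendsto_nhds_unique h₁ h₂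

-- The general case follows from the case of global data by freezing `k` and `g` outside `[0, t]`:
-- the extended functions take at `u + ε` their values at `(u + ε) ∧ t`.
theorem IsC13.hasSymmInt (hF : IsC13 F) (hk : LipschitzOnWith K k (Icc 0 t))
    (hg : HolderOnWith C r g (Icc 0 t)) (hr : 1 / 3 < r) (ht : 0 ≤ t) :
    HasSymmInt (fun u => deriv (F (k u)) (g u)) g t (F (k t) (g t) - F (k 0) (g 0)
      - ∫ u in (0 : ℝ)..t, deriv (F · (g u)) (k u) * deriv k u) := by
  set p : ℝ → ℝ := fun u => projIcc 0 t ht u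
  have hp : LipschitzWith 1 p := by
    simpa [p, Function.comp_def] using (LipschitzWith.subtype_val (Icc 0 t)).comp
      (LipschitzWith.projIcc ht)
  have hpmem : ∀ u, p u ∈ Icc 0 t := fun u => (projIcc 0 t ht u).2
  have hpmin : ∀ {u}, 0 ≤ u → p u = min u t := fun hu => by
    simp [p, coe_projIcc, hu, ht, min_comm]
  have hpself : ∀ {u}, u ∈ Icc 0 t → p u = u := fun hu => (hpmin hu.1).trans (min_eq_left hu.2)
  have hk' : LipschitzWith K (k ∘ p) := by
    simpa using lipschitzOnWith_univ.1 (hk.comp hp.lipschitzOnWith fun u _ => hpmem u)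
  have hg' : HolderWith C r (g ∘ p) := by
    simpa using hg.comp_holderWith (holderWith_one.2 hp) hpmem
  have hlim := hF.tendsto_integral_symmQuotient hk' hg' hr ht
  have hderiv : ∫ u in (0 : ℝ)..t, deriv (F · ((g ∘ p) u)) ((k ∘ p) u) * deriv (k ∘ p) u =
      ∫ u in (0 : ℝ)..t, deriv (F · (g u)) (k u) * deriv k u := by
    refine integral_congr_Ioo_of_le ht fun u hu => ?_
    have hev : k ∘ p =ᶠ[𝓝 u] k := by
      filter_upwards [Icc_mem_nhds hu.1 hu.2] with v hv
      simp only [Function.comp_apply, hpself hv]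
    simp only [hev.deriv_eq, Function.comp_apply, hpself (Ioo_subset_Icc_self hu)]
  rw [hderiv] at hlim
  simp only [Function.comp_apply, hpself (left_mem_Icc.2 ht), hpself (right_mem_Icc.2 ht)] at hlim
  refine hlim.congr' ?_
  filter_upwards [self_mem_nhdsWithin] with ε hε
  refine integral_congr fun u hu => ?_
  rw [uIcc_of_le ht] at hu
  simp only [hpself hu, hpmin (add_nonneg hu.1 (le_of_lt hε))]

end SymmetricIntegral

section Flow

lemma continuous_of_monotone_of_continuous {X Y Z : Type*} [LinearOrder X] [TopologicalSpace X]
    [OrderTopology X] [DenselyOrdered X] [NoMinOrder X] [NoMaxOrder X] [TopologicalSpace Y]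
    [LinearOrder Z] [TopologicalSpace Z] [OrderTopology Z] {F : X → Y → Z}
    (hmono : ∀ y, Monotone (F · y)) (hleft : ∀ y, Continuous (F · y))
    (hright : ∀ x, Continuous (F x)) : Continuous fun p : X × Y => F p.1 p.2 := by
  refine continuous_iff_continuousAt.2 fun ⟨x, y⟩ =>
    tendsto_order.2 ⟨fun c hc => ?_, fun c hc => ?_⟩
  · have hev : ∀ᶠ x' in 𝓝[<] x, c < F x' y :=
      nhdsWithin_le_nhds ((hleft y).continuousAt.eventually_const_lt hc)
    obtain ⟨x', hx', hlt⟩ := (hev.and self_mem_nhdsWithin).exists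
    filter_upwards [(eventually_gt_nhds hlt).prod_nhds
      ((hright x').continuousAt.eventually_const_lt hx')] with p hp
    exact hp.2.trans_le (hmono p.2 hp.1.le)
  · have hev : ∀ᶠ x' in 𝓝[>] x, F x' y < c :=
      nhdsWithin_le_nhds ((hleft y).continuousAt.eventually_lt_const hc)
    obtain ⟨x', hx', hlt⟩ := (hev.and self_mem_nhdsWithin).exists
    filter_upwards [(eventually_lt_nhds hlt).prod_nhds
      ((hright x').continuousAt.eventually_lt_const hx')] with p hp
    exact (hmono p.2 hp.1.le).trans_lt hp.2

lemma eq_mul_exp_integral_of_hasDerivAt {u m : ℝ → ℝ} (hm : Continuous m)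
    (hu : ∀ t, HasDerivAt u (m t * u t) t) (s t : ℝ) :
    u t = u s * Real.exp (∫ η in s..t, m η) := by
  have hexp : ∀ t, HasDerivAt (fun t => Real.exp (-∫ η in s..t, m η))
      (Real.exp (-∫ η in s..t, m η) * -m t) t := fun t =>
    (hm.integral_hasStrictDerivAt s t).hasDerivAt.neg.exp
  have hconst := is_const_of_deriv_eq_zero
    (fun t => ((hu t).mul (hexp t)).differentiableAt)
    (fun t => by rw [((hu t).mul (hexp t)).deriv]; ring) t s
  simp only [Pi.mul_apply, integral_same, neg_zero, Real.exp_zero, mul_one] at hconst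
  rw [← hconst, mul_assoc, ← Real.exp_add, neg_add_cancel, Real.exp_zero, mul_one]

lemma sub_eq_sub_mul_exp_of_hasDerivAt {σ p q : ℝ → ℝ} (hσ : ContDiff ℝ 1 σ)
    (hp : ∀ t, HasDerivAt p (σ (p t)) t) (hq : ∀ t, HasDerivAt q (σ (q t)) t) (s t : ℝ) :
    q t - p t = (q s - p s) * Real.exp (∫ η in s..t, segmentMean (deriv σ) (p η) (q η)) := by
  have hσ' : Continuous (deriv σ) := hσ.continuous_deriv_one
  have hpc : Continuous p := continuous_iff_continuousAt.2 fun t => (hp t).continuousAt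
  have hqc : Continuous q := continuous_iff_continuousAt.2 fun t => (hq t).continuousAt
  refine eq_mul_exp_integral_of_hasDerivAt (u := fun t => q t - p t) ?_ (fun t => ?_) s t
  · exact (continuous_segmentMean (F := fun x _ => deriv σ x) (by fun_prop)).comp
      (by fun_prop : Continuous fun η => ((p η, q η), (0 : ℝ)))
  · refine ((hq t).sub (hp t)).congr_deriv ?_
    exact sub_eq_segmentMean_mul (fun x => (hσ.differentiable one_ne_zero x).hasDerivAt) hσ' _ _

/-- `φ` is the flow of the autonomous equation `p' = σ(p)`: its second argument is the time, and
every solution lives for all times. -/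
structure IsFlow (σ : ℝ → ℝ) (φ : ℝ → ℝ → ℝ) : Prop where
  map_zero : ∀ α, φ α 0 = α
  hasDerivAt_right : ∀ α β, HasDerivAt (φ α) (σ (φ α β)) β

/-- The derivative `∂φ/∂α` of a flow `φ` of `σ` with respect to the initial value `α`, given by the
solution of the linearised equation. -/
noncomputable def flowJacobian (σ : ℝ → ℝ) (φ : ℝ → ℝ → ℝ) (α β : ℝ) : ℝ :=
  Real.exp (∫ η in (0 : ℝ)..β, deriv σ (φ α η))

lemma flowJacobian_ne_zero (σ : ℝ → ℝ) (φ : ℝ → ℝ → ℝ) (α β : ℝ) : flowJacobian σ φ α β ≠ 0 :=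
  (Real.exp_pos _).ne'

lemma fsb_eq_div (b σ : ℝ → ℝ) (φ : ℝ → ℝ → ℝ) (α β : ℝ) :
    fsb b σ φ α β = b (φ α β) / flowJacobian σ φ α β := by
  rw [fsb, flowJacobian, Real.exp_neg, div_eq_inv_mul]

lemma flowJacobian_mul_fsb (b σ : ℝ → ℝ) (φ : ℝ → ℝ → ℝ) (α β : ℝ) :
    flowJacobian σ φ α β * fsb b σ φ α β = b (φ α β) := by
  rw [fsb_eq_div, mul_div_cancel₀ _ (flowJacobian_ne_zero σ φ α β)]

namespace IsFlow

variable {b σ : ℝ → ℝ} {φ : ℝ → ℝ → ℝ}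

lemma continuous_right (hφ : IsFlow σ φ) (α : ℝ) : Continuous (φ α) :=
  continuous_iff_continuousAt.2 fun β => (hφ.hasDerivAt_right α β).continuousAt

lemma sub_eq (hφ : IsFlow σ φ) (hσ : ContDiff ℝ 1 σ) (α₁ α₂ β : ℝ) :
    φ α₂ β - φ α₁ β = (α₂ - α₁) *
      Real.exp (∫ η in (0 : ℝ)..β, segmentMean (deriv σ) (φ α₁ η) (φ α₂ η)) := by
  simpa only [hφ.map_zero] using sub_eq_sub_mul_exp_of_hasDerivAt hσ (hφ.hasDerivAt_right α₁)
    (hφ.hasDerivAt_right α₂) 0 β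

lemma strictMono (hφ : IsFlow σ φ) (hσ : ContDiff ℝ 1 σ) (β : ℝ) : StrictMono (φ · β) :=
  fun α₁ α₂ h => by
    have := mul_pos (sub_pos.2 h)
      (Real.exp_pos (∫ η in (0 : ℝ)..β, segmentMean (deriv σ) (φ α₁ η) (φ α₂ η)))
    exact sub_pos.1 (hφ.sub_eq hσ α₁ α₂ β ▸ this)

lemma apply_apply (hφ : IsFlow σ φ) (hσ : ContDiff ℝ 1 σ) (α s t : ℝ) :
    φ (φ α s) t = φ α (s + t) := by
  have := sub_eq_sub_mul_exp_of_hasDerivAt hσ (p := fun t => φ α (s + t))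
    (fun t => (hφ.hasDerivAt_right α (s + t)).comp_const_add s t)
    (hφ.hasDerivAt_right (φ α s)) 0 t
  rwa [hφ.map_zero, add_zero, sub_self, zero_mul, sub_eq_zero] at this

lemma apply_neg_apply (hφ : IsFlow σ φ) (hσ : ContDiff ℝ 1 σ) (α β : ℝ) :
    φ (φ α (-β)) β = α := by
  rw [hφ.apply_apply hσ, neg_add_cancel, hφ.map_zero]

lemma continuous (hφ : IsFlow σ φ) (hσ : ContDiff ℝ 1 σ) :
    Continuous fun p : ℝ × ℝ => φ p.1 p.2 :=
  continuous_of_monotone_of_continuous (fun β => (hφ.strictMono hσ β).monotone)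
    (fun β => (hφ.strictMono hσ β).monotone.continuous_of_surjective
      fun α => ⟨φ α (-β), hφ.apply_neg_apply hσ α β⟩)
    hφ.continuous_right

lemma continuous_deriv_comp (hφ : IsFlow σ φ) (hσ : ContDiff ℝ 1 σ) :
    Continuous fun p : ℝ × ℝ => deriv σ (φ p.1 p.2) :=
  hσ.continuous_deriv_one.comp (hφ.continuous hσ)

lemma continuous_jacobian (hφ : IsFlow σ φ) (hσ : ContDiff ℝ 1 σ) :
    Continuous fun p : ℝ × ℝ => flowJacobian σ φ p.1 p.2 :=
  Real.continuous_exp.comp <| continuous_parametric_intervalIntegral_of_continuous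
    (f := fun p : ℝ × ℝ => fun η => deriv σ (φ p.1 η))
    ((hφ.continuous_deriv_comp hσ).comp
      (by fun_prop : Continuous fun q : (ℝ × ℝ) × ℝ => (q.1.1, q.2))) continuous_snd

lemma hasDerivAt_left (hφ : IsFlow σ φ) (hσ : ContDiff ℝ 1 σ) (α β : ℝ) :
    HasDerivAt (φ · β) (flowJacobian σ φ α β) α := by
  have hφc := hφ.continuous hσ
  have hmean : Continuous fun q : ℝ × ℝ => segmentMean (deriv σ) (φ α q.2) (φ q.1 q.2) :=
    (continuous_segmentMean (F := fun x _ => deriv σ x) (by fun_prop)).comp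
      (by fun_prop : Continuous fun q : ℝ × ℝ => ((φ α q.2, φ q.1 q.2), (0 : ℝ)))
  have hexp : Continuous fun α' =>
      Real.exp (∫ η in (0 : ℝ)..β, segmentMean (deriv σ) (φ α η) (φ α' η)) :=
    Real.continuous_exp.comp (continuous_parametric_intervalIntegral_of_continuous' hmean 0 β)
  have hlim := (hexp.tendsto α).mono_left (nhdsWithin_le_nhds (s := {α}ᶜ))
  simp only [segmentMean_self] at hlim
  refine hasDerivAt_iff_tendsto_slope.2 (hlim.congr' ?_)
  filter_upwards [self_mem_nhdsWithin] with α' hα'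
  rw [slope_def_field, hφ.sub_eq hσ, mul_div_cancel_left₀ _ (sub_ne_zero.2 hα')]

lemma jacobian_mul_apply (hφ : IsFlow σ φ) (hσ : ContDiff ℝ 1 σ) (α β : ℝ) :
    flowJacobian σ φ α β * σ α = σ (φ α β) := by
  have := eq_mul_exp_integral_of_hasDerivAt (u := fun β => σ (φ α β))
    ((hφ.continuous_deriv_comp hσ).comp (by fun_prop : Continuous fun η : ℝ => (α, η)))
    (fun β => (hσ.differentiable one_ne_zero _).hasDerivAt.comp β (hφ.hasDerivAt_right α β)) 0 β
  rw [this, hφ.map_zero, mul_comm]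
  rfl

lemma hasDerivAt_jacobian_right (hφ : IsFlow σ φ) (hσ : ContDiff ℝ 1 σ) (α β : ℝ) :
    HasDerivAt (flowJacobian σ φ α) (flowJacobian σ φ α β * deriv σ (φ α β)) β :=
  (((hφ.continuous_deriv_comp hσ).comp
    (by fun_prop : Continuous fun η : ℝ => (α, η))).integral_hasStrictDerivAt 0 β).hasDerivAt.exp

lemma hasDerivAt_jacobian_left (hφ : IsFlow σ φ) (hσ : ContDiff ℝ 2 σ) (α β : ℝ) :
    HasDerivAt (flowJacobian σ φ · β) (flowJacobian σ φ α β *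
      ∫ η in (0 : ℝ)..β, deriv (deriv σ) (φ α η) * flowJacobian σ φ α η) α := by
  have hσ₁ : ContDiff ℝ 1 σ := hσ.of_le one_le_two
  have hσ₂ : ContDiff ℝ 1 (deriv σ) := ((contDiff_succ_iff_deriv (n := 1)).1 hσ).2.2
  refine (hasDerivAt_integral_left (F := fun α η => deriv σ (φ α η))
    (F₁ := fun α η => deriv (deriv σ) (φ α η) * flowJacobian σ φ α η) (fun α η => ?_)
    (hφ.continuous_deriv_comp hσ₁) ?_ 0 β α).exp
  · exact (hσ₂.differentiable one_ne_zero _).hasDerivAt.comp α (hφ.hasDerivAt_left hσ₁ α η)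
  · exact (hσ₂.continuous_deriv_one.comp (hφ.continuous hσ₁)).mul (hφ.continuous_jacobian hσ₁)

lemma continuous_jacobian_deriv_left (hφ : IsFlow σ φ) (hσ : ContDiff ℝ 2 σ) :
    Continuous fun p : ℝ × ℝ => flowJacobian σ φ p.1 p.2 *
      ∫ η in (0 : ℝ)..p.2, deriv (deriv σ) (φ p.1 η) * flowJacobian σ φ p.1 η := by
  have hσ₁ : ContDiff ℝ 1 σ := hσ.of_le one_le_two
  have hφc := hφ.continuous hσ₁
  have hJ := hφ.continuous_jacobian hσ₁
  refine hJ.mul (continuous_parametric_intervalIntegral_of_continuous ?_ continuous_snd)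
  fun_prop

lemma continuous_fsb (hφ : IsFlow σ φ) (hb : Continuous b) (hσ : ContDiff ℝ 1 σ) :
    Continuous fun p : ℝ × ℝ => fsb b σ φ p.1 p.2 := by
  simp only [fsb_eq_div]
  exact (hb.comp (hφ.continuous hσ)).div (hφ.continuous_jacobian hσ) fun p =>
    flowJacobian_ne_zero σ φ _ _

lemma exists_lipschitzOnWith_fsb (hφ : IsFlow σ φ) (hb : ContDiff ℝ 1 b) (hσ : ContDiff ℝ 2 σ)
    {s t : Set ℝ} (hs : IsCompact s) (hs' : Convex ℝ s) (ht : IsCompact t) :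
    ∃ L : ℝ≥0, ∀ β ∈ t, LipschitzOnWith L (fsb b σ φ · β) s := by
  have hσ₁ : ContDiff ℝ 1 σ := hσ.of_le one_le_two
  have hb' := hb.continuous_deriv_one
  have hφc := hφ.continuous hσ₁
  have hJ := hφ.continuous_jacobian hσ₁
  have hJ' := hφ.continuous_jacobian_deriv_left hσ
  simp only [fsb_eq_div]
  refine exists_lipschitzOnWith_left (F := fun α β => b (φ α β) / flowJacobian σ φ α β)
    (fun α β => ((hb.differentiable one_ne_zero _).hasDerivAt.comp α
      (hφ.hasDerivAt_left hσ₁ α β)).div (hφ.hasDerivAt_jacobian_left hσ α β)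
        (flowJacobian_ne_zero σ φ α β))
    ?_ hs hs' ht
  exact (((hb'.comp hφc).mul hJ).mul hJ |>.sub ((hb.continuous.comp hφc).mul hJ')).div
    (hJ.pow 2) fun p => pow_ne_zero 2 (flowJacobian_ne_zero σ φ _ _)

end IsFlow

end Flow

section PicardIntegral

-- Where `u` is not integrable on `[0, β]`, the integral is `0` by convention.
lemma measurable_integral_of_bounded {u : ℝ → ℝ} {M : ℝ} (hu : ∀ η, |u η| ≤ M) :
    Measurable fun β => ∫ η in (0 : ℝ)..β, u η := by
  classical
  set S : Set ℝ := {β | IntervalIntegrable u volume 0 β}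
  have hS : S.OrdConnected := ordConnected_iff_uIcc_subset.2 fun c hc d hd e he =>
    hc.trans ((hc.symm.trans hd).mono_set (uIcc_subset_uIcc left_mem_uIcc he))
  have hlip : LipschitzOnWith M.toNNReal (fun β => ∫ η in (0 : ℝ)..β, u η) S :=
    LipschitzOnWith.of_dist_le_mul fun c hc d hd => by
      rw [dist_eq_norm, integral_interval_sub_left hc hd, Real.dist_eq]
      exact norm_integral_le_of_norm_le_const fun η _ => (hu η).trans M.le_coe_toNNReal
  have hpw : (fun β => ∫ η in (0 : ℝ)..β, u η) =
      S.piecewise (fun β => ∫ η in (0 : ℝ)..β, u η) 0 := by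
    ext β
    by_cases hβ : β ∈ S
    · simp only [hβ, piecewise_eq_of_mem]
    · simpa only [hβ, not_false_eq_true, piecewise_eq_of_notMem, Pi.zero_apply] using
        integral_undef hβ
  rw [hpw]
  exact hlip.continuousOn.measurable_piecewise continuousOn_const hS.measurableSet

lemma continuous_of_eq_add_integral {σ x : ℝ → ℝ} {α M : ℝ} (hσ : Continuous σ)
    (hM : ∀ v, |σ v| ≤ M) (hx : ∀ β, x β = α + ∫ η in (0 : ℝ)..β, σ (x η)) : Continuous x := by
  have hmeas : Measurable x := by
    rw [funext hx]
    exact (measurable_integral_of_bounded fun η => hM (x η)).const_add α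
  have hint : ∀ c d, IntervalIntegrable (fun η => σ (x η)) volume c d := fun c d =>
    intervalIntegrable_iff.2 <| Measure.integrableOn_of_bounded (M := M) (by simp)
      (hσ.measurable.comp hmeas).aestronglyMeasurable (ae_of_all _ fun η => hM _)
  rw [funext hx]
  exact continuous_const.add (continuous_primitive hint 0)

lemma isFlow_of_eq_add_integral {σ : ℝ → ℝ} {φ : ℝ → ℝ → ℝ} {M : ℝ} (hσ : Continuous σ)
    (hM : ∀ v, |σ v| ≤ M) (hφ : ∀ α β, φ α β = α + ∫ η in (0 : ℝ)..β, σ (φ α η)) :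
    IsFlow σ φ where
  map_zero α := by simpa using hφ α 0
  hasDerivAt_right α β := by
    have hφc := continuous_of_eq_add_integral hσ hM (hφ α)
    exact (((hσ.comp hφc).integral_hasStrictDerivAt 0 β).hasDerivAt.const_add
      α).congr_of_eventuallyEq (.of_forall (hφ α))

end PicardIntegral

section C13

variable {F F₁ F₂ F₂₂ F₂₂₂ G G₂ G₂₂ : ℝ → ℝ → ℝ} {σ : ℝ → ℝ} {φ : ℝ → ℝ → ℝ}

lemma IsC13.of_hasDerivAt (h₁ : ∀ x y, HasDerivAt (F · y) (F₁ x y) x)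
    (h₂ : ∀ x y, HasDerivAt (F x) (F₂ x y) y) (h₂₂ : ∀ x y, HasDerivAt (F₂ x) (F₂₂ x y) y)
    (h₂₂₂ : ∀ x y, HasDerivAt (F₂₂ x) (F₂₂₂ x y) y)
    (hF : Continuous fun p : ℝ × ℝ => F p.1 p.2) (hF₁ : Continuous fun p : ℝ × ℝ => F₁ p.1 p.2)
    (hF₂ : Continuous fun p : ℝ × ℝ => F₂ p.1 p.2)
    (hF₂₂ : Continuous fun p : ℝ × ℝ => F₂₂ p.1 p.2)
    (hF₂₂₂ : Continuous fun p : ℝ × ℝ => F₂₂₂ p.1 p.2) : IsC13 F := by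
  have e₁ : ∀ x y, deriv (F · y) x = F₁ x y := fun x y => (h₁ x y).deriv
  have e₂ : ∀ x, deriv (F x) = F₂ x := fun x => funext fun y => (h₂ x y).deriv
  have e₂₂ : ∀ x, deriv (F₂ x) = F₂₂ x := fun x => funext fun y => (h₂₂ x y).deriv
  have e₂₂₂ : ∀ x, deriv (F₂₂ x) = F₂₂₂ x := fun x => funext fun y => (h₂₂₂ x y).deriv
  have hcd₂₂ : ∀ x, ContDiff ℝ 1 (F₂₂ x) := fun x => contDiff_one_iff_deriv.2
    ⟨fun y => (h₂₂₂ x y).differentiableAt, by rw [e₂₂₂]; fun_prop⟩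
  have hcd₂ : ∀ x, ContDiff ℝ 2 (F₂ x) := fun x => (contDiff_succ_iff_deriv (n := 1)).2
    ⟨fun y => (h₂₂ x y).differentiableAt, by simp, by rw [e₂₂]; exact hcd₂₂ x⟩
  refine ⟨fun y x => (h₁ x y).differentiableAt, fun x => (contDiff_succ_iff_deriv (n := 2)).2
    ⟨fun y => (h₂ x y).differentiableAt, by simp, by rw [e₂]; exact hcd₂ x⟩, hF, ?_, ?_, ?_, ?_⟩
  all_goals simpa only [e₁, e₂, e₂₂, e₂₂₂]

lemma IsC13.of_hasDerivAt_comp (hσ : ContDiff ℝ 2 σ) (hF : ∀ x y, HasDerivAt (F · y) (F₁ x y) x)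
    (hF' : ∀ x y, HasDerivAt (F x) (σ (G x y)) y) (hG : ∀ x y, HasDerivAt (G x) (G₂ x y) y)
    (hG₂ : ∀ x y, HasDerivAt (G₂ x) (G₂₂ x y) y) (hFc : Continuous fun p : ℝ × ℝ => F p.1 p.2)
    (hF₁ : Continuous fun p : ℝ × ℝ => F₁ p.1 p.2) (hGc : Continuous fun p : ℝ × ℝ => G p.1 p.2)
    (hG₂c : Continuous fun p : ℝ × ℝ => G₂ p.1 p.2)
    (hG₂₂ : Continuous fun p : ℝ × ℝ => G₂₂ p.1 p.2) : IsC13 F := by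
  have hσ₁ : ContDiff ℝ 1 (deriv σ) := ((contDiff_succ_iff_deriv (n := 1)).1 hσ).2.2
  have hσc := hσ.continuous
  have hσ₁c := hσ₁.continuous
  refine .of_hasDerivAt hF hF'
    (fun x y => (hσ.differentiable two_ne_zero _).hasDerivAt.comp y (hG x y))
    (fun x y => ((hσ₁.differentiable one_ne_zero _).hasDerivAt.comp y (hG x y)).mul (hG₂ x y))
    hFc hF₁ (by fun_prop) (by fun_prop) (by simp only [Function.comp_apply]; fun_prop)

lemma IsFlow.isC13 (hφ : IsFlow σ φ) (hσ : ContDiff ℝ 2 σ) : IsC13 φ := by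
  have hσ₁ : ContDiff ℝ 1 σ := hσ.of_le one_le_two
  have hφc := hφ.continuous hσ₁
  have hσc := hσ.continuous
  exact .of_hasDerivAt_comp hσ (hφ.hasDerivAt_left hσ₁) hφ.hasDerivAt_right hφ.hasDerivAt_right
    (fun x y => (hσ₁.differentiable one_ne_zero _).hasDerivAt.comp y (hφ.hasDerivAt_right x y))
    hφc (hφ.continuous_jacobian hσ₁) hφc (by fun_prop) (by fun_prop)

lemma IsC13.integral_comp (hF : IsC13 F) (hσ : ContDiff ℝ 2 σ) :
    IsC13 fun x y => ∫ η in (0 : ℝ)..y, σ (F x η) := by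
  have hσ₁ : ContDiff ℝ 1 σ := hσ.of_le one_le_two
  have hFc := hF.continuous
  have hσc := hσ.continuous
  have hσF : Continuous fun p : ℝ × ℝ => σ (F p.1 p.2) := by fun_prop
  have hdσF : Continuous fun p : ℝ × ℝ => deriv σ (F p.1 p.2) * deriv (F · p.2) p.1 :=
    (hσ₁.continuous_deriv_one.comp hFc).mul hF.continuous_deriv_left
  refine .of_hasDerivAt_comp hσ (fun x y => hasDerivAt_integral_left
      (fun x η => (hσ₁.differentiable one_ne_zero _).hasDerivAt.comp x (hF.hasDerivAt_left x η))
      hσF hdσF 0 y x)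
    (fun x y => ((by fun_prop : Continuous fun η => σ (F x η)).integral_hasStrictDerivAt
      0 y).hasDerivAt)
    hF.hasDerivAt_right hF.hasDerivAt_deriv_right
    (continuous_parametric_intervalIntegral_of_continuous (by fun_prop) continuous_snd)
    (continuous_parametric_intervalIntegral_of_continuous ?_ continuous_snd)
    hFc hF.continuous_deriv_right hF.continuous_deriv_deriv_right
  exact hdσF.comp (by fun_prop : Continuous fun q : (ℝ × ℝ) × ℝ => (q.1.1, q.2))

end C13

section Primitive

variable {a v : ℝ → ℝ} {ξ T : ℝ}

lemma hasDerivWithinAt_of_eq_add_integral (hv : ContinuousOn v (Icc 0 T))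
    (ha : ∀ t ∈ Icc 0 T, a t = ξ + ∫ u in (0 : ℝ)..t, v u) {t : ℝ} (ht : t ∈ Icc 0 T) :
    HasDerivWithinAt a (v t) (Icc 0 T) t := by
  have : Fact (t ∈ Icc 0 T) := ⟨ht⟩
  have hint : IntervalIntegrable v volume 0 t :=
    (hv.mono (Icc_subset_Icc_right ht.2)).intervalIntegrable_of_Icc ht.1
  exact ((integral_hasDerivWithinAt_right hint
    (hv.stronglyMeasurableAtFilter_nhdsWithin measurableSet_Icc t) (hv t ht)).const_add ξ).congr
      ha (ha t ht)

lemma lipschitzOnWith_of_eq_add_integral {M : ℝ≥0} (hv : IntervalIntegrable v volume 0 T)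
    (hM : ∀ u ∈ Ioo 0 T, |v u| ≤ M) (ha : ∀ t ∈ Icc 0 T, a t = ξ + ∫ u in (0 : ℝ)..t, v u) :
    LipschitzOnWith M a (Icc 0 T) := by
  refine LipschitzOnWith.of_dist_le_mul fun t ht s hs => ?_
  have hint : ∀ r ∈ Icc 0 T, IntervalIntegrable v volume 0 r := fun r hr => hv.mono_set
    (uIcc_subset_uIcc left_mem_uIcc (Icc_subset_uIcc hr))
  rw [ha t ht, ha s hs, dist_add_left, dist_eq_norm, integral_interval_sub_left (hint t ht)
    (hint s hs)]
  refine norm_integral_le_of_norm_le_const_ae ?_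
  filter_upwards [Measure.ae_ne volume T] with u hu hmem
  obtain ⟨hs', ht'⟩ | ⟨ht', hs'⟩ := mem_uIoc.1 hmem
  · exact hM u ⟨hs.1.trans_lt hs', (ht'.trans ht.2).lt_of_ne hu⟩
  · exact hM u ⟨ht.1.trans_lt ht', (hs'.trans hs.2).lt_of_ne hu⟩

lemma intervalIntegrable_mul_deriv_of_lipschitzOnWith {w k : ℝ → ℝ} {K : ℝ≥0}
    (hk : LipschitzOnWith K k (Icc 0 T)) (hw : ContinuousOn w (Icc 0 T)) (hT : 0 ≤ T) :
    IntervalIntegrable (fun u => w u * deriv k u) volume 0 T := by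
  rw [← uIcc_of_le hT] at hk hw
  exact hk.absolutelyContinuousOnInterval.intervalIntegrable_deriv.continuousOn_mul hw

lemma ae_eq_zero_of_forall_integral_eq_zero (hv : IntervalIntegrable v volume 0 T)
    (h : ∀ t ∈ Icc 0 T, ∫ u in (0 : ℝ)..t, v u = 0) : ∀ᵐ u, u ∈ Ioc 0 T → v u = 0 := by
  filter_upwards [hv.ae_hasDerivAt_integral, Measure.ae_ne volume T] with u hu hne hmem
  have hd := hu (Icc_subset_uIcc (Ioc_subset_Icc_self hmem)) 0 left_mem_uIcc
  refine hd.unique ((hasDerivAt_const u (0 : ℝ)).congr_of_eventuallyEq ?_)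
  filter_upwards [Icc_mem_nhds hmem.1 (lt_of_le_of_ne hmem.2 hne)] with t ht
  exact h t ht

lemma eq_add_integral_of_ae_deriv_eq {K : ℝ≥0} (ha : LipschitzOnWith K a (Icc 0 T))
    (hv : ∀ᵐ u, u ∈ Ioc 0 T → deriv a u = v u) {t : ℝ} (ht : t ∈ Icc 0 T) :
    a t = a 0 + ∫ u in (0 : ℝ)..t, v u := by
  have hac : AbsolutelyContinuousOnInterval a 0 t := (ha.mono
    (uIcc_of_le ht.1 ▸ Icc_subset_Icc_right ht.2)).absolutelyContinuousOnInterval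
  rw [← sub_eq_iff_eq_add', ← hac.integral_deriv_eq_sub]
  refine integral_congr_ae ?_
  filter_upwards [hv] with u hu hmem
  rw [uIoc_of_le ht.1] at hmem
  exact hu ⟨hmem.1, hmem.2.trans ht.2⟩

end Primitive

section Equation

variable {b σ g a y : ℝ → ℝ} {φ : ℝ → ℝ → ℝ} {ξ T : ℝ} {C r : ℝ≥0}

/-- The equation `y_t = ξ + ∫₀ᵗ b(y_u) du + ∫₀ᵗ σ(y_u) d°g_u` on `[0, T]`; the existence of the
symmetric integrals is part of the condition. -/
def SolvesSymmEq (b σ : ℝ → ℝ) (ξ : ℝ) (g y : ℝ → ℝ) (T : ℝ) : Prop :=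
  ∀ t ∈ Icc 0 T, ∃ I : ℝ, HasSymmInt (fun u => σ (y u)) g t I ∧
    y t = ξ + (∫ u in (0 : ℝ)..t, b (y u)) + I

/-- The ordinary differential equation `a' = f_{σ,b}(a, g)`, `a_0 = ξ` on `[0, T]`, in integrated
form, that the Doss–Sussmann representation `φ(a, g)` is built on. -/
structure SolvesPullbackEq (b σ : ℝ → ℝ) (φ : ℝ → ℝ → ℝ) (ξ : ℝ) (g a : ℝ → ℝ) (T : ℝ) :
    Prop where
  continuousOn : ContinuousOn a (Icc 0 T)
  eq_add_integral : ∀ t ∈ Icc 0 T, a t = ξ + ∫ u in (0 : ℝ)..t, fsb b σ φ (a u) (g u)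

lemma IsFlow.hasSymmInt (hφ : IsFlow σ φ) (hσ : ContDiff ℝ 2 σ) {K : ℝ≥0} {k : ℝ → ℝ} {t : ℝ}
    (hk : LipschitzOnWith K k (Icc 0 t)) (hg : HolderOnWith C r g (Icc 0 t)) (hr : 1 / 3 < r)
    (ht : 0 ≤ t) :
    HasSymmInt (fun u => σ (φ (k u) (g u))) g t (φ (k t) (g t) - φ (k 0) (g 0)
      - ∫ u in (0 : ℝ)..t, flowJacobian σ φ (k u) (g u) * deriv k u) := by
  simpa only [(hφ.hasDerivAt_right _ _).deriv,
    (hφ.hasDerivAt_left (hσ.of_le one_le_two) _ _).deriv]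
    using (hφ.isC13 hσ).hasSymmInt hk hg hr ht

namespace SolvesPullbackEq

lemma apply_zero (ha : SolvesPullbackEq b σ φ ξ g a T) (hT : 0 ≤ T) : a 0 = ξ := by
  simpa using ha.eq_add_integral 0 (left_mem_Icc.2 hT)

lemma continuousOn_fsb (ha : SolvesPullbackEq b σ φ ξ g a T) (hφ : IsFlow σ φ) (hb : Continuous b)
    (hσ : ContDiff ℝ 1 σ) (hg : ContinuousOn g (Icc 0 T)) :
    ContinuousOn (fun u => fsb b σ φ (a u) (g u)) (Icc 0 T) :=
  (hφ.continuous_fsb hb hσ).comp_continuousOn (ha.continuousOn.prodMk hg)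

lemma hasDerivWithinAt (ha : SolvesPullbackEq b σ φ ξ g a T) (hφ : IsFlow σ φ)
    (hb : Continuous b) (hσ : ContDiff ℝ 1 σ) (hg : ContinuousOn g (Icc 0 T)) {t : ℝ}
    (ht : t ∈ Icc 0 T) : HasDerivWithinAt a (fsb b σ φ (a t) (g t)) (Icc 0 T) t :=
  hasDerivWithinAt_of_eq_add_integral (ha.continuousOn_fsb hφ hb hσ hg) ha.eq_add_integral ht

lemma exists_lipschitzOnWith (ha : SolvesPullbackEq b σ φ ξ g a T) (hφ : IsFlow σ φ)
    (hb : Continuous b) (hσ : ContDiff ℝ 1 σ) (hg : ContinuousOn g (Icc 0 T)) :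
    ∃ K : ℝ≥0, LipschitzOnWith K a (Icc 0 T) := by
  obtain hT | hT := lt_or_ge T 0
  · simp [Icc_eq_empty_of_lt hT]
  have hfsb := ha.continuousOn_fsb hφ hb hσ hg
  obtain ⟨M, hM⟩ := isCompact_Icc.exists_bound_of_continuousOn hfsb
  exact ⟨M.toNNReal, lipschitzOnWith_of_eq_add_integral (hfsb.intervalIntegrable_of_Icc hT)
    (fun u hu => (hM u (Ioo_subset_Icc_self hu)).trans M.le_coe_toNNReal) ha.eq_add_integral⟩

lemma eqOn (ha : SolvesPullbackEq b σ φ ξ g a T) {z : ℝ → ℝ}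
    (hz : SolvesPullbackEq b σ φ ξ g z T) (hφ : IsFlow σ φ) (hb : ContDiff ℝ 1 b)
    (hσ : ContDiff ℝ 2 σ) (hg : ContinuousOn g (Icc 0 T)) : EqOn z a (Icc 0 T) := by
  obtain hT | hT := lt_or_ge T 0
  · simp [Icc_eq_empty_of_lt hT]
  have hσ₁ : ContDiff ℝ 1 σ := hσ.of_le one_le_two
  obtain ⟨R, hR⟩ := ((isCompact_Icc.image_of_continuousOn ha.continuousOn).union
    (isCompact_Icc.image_of_continuousOn hz.continuousOn)).isBounded.subset_closedBall 0
  obtain ⟨L, hL⟩ := hφ.exists_lipschitzOnWith_fsb hb hσ (isCompact_closedBall 0 R)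
    (convex_closedBall 0 R) (isCompact_Icc.image_of_continuousOn hg)
  have hderiv : ∀ {x}, SolvesPullbackEq b σ φ ξ g x T → ∀ t ∈ Ico 0 T,
      HasDerivWithinAt x (fsb b σ φ (x t) (g t)) (Ici t) t := fun hx t ht =>
    (hx.hasDerivWithinAt hφ hb.continuous hσ₁ hg (Ico_subset_Icc_self ht)).mono_of_mem_nhdsWithin
      (Icc_mem_nhdsGE_of_mem ht)
  exact ODE_solution_unique_of_mem_Icc_right (v := fun t x => fsb b σ φ x (g t))
    (s := fun _ => Metric.closedBall 0 R)
    (fun t ht => hL _ (mem_image_of_mem g (Ico_subset_Icc_self ht)))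
    hz.continuousOn (hderiv hz)
    (fun t ht => hR (.inr (mem_image_of_mem z (Ico_subset_Icc_self ht))))
    ha.continuousOn (hderiv ha)
    (fun t ht => hR (.inl (mem_image_of_mem a (Ico_subset_Icc_self ht))))
    ((hz.apply_zero hT).trans (ha.apply_zero hT).symm)

theorem solvesSymmEq (ha : SolvesPullbackEq b σ φ ξ g a T) (hφ : IsFlow σ φ) (hb : Continuous b)
    (hσ : ContDiff ℝ 2 σ) (hg : HolderOnWith C r g (Icc 0 T)) (hr : 1 / 3 < r) (hg0 : g 0 = 0) :
    SolvesSymmEq b σ ξ g (fun t => φ (a t) (g t)) T := by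
  intro t ht
  have hσ₁ : ContDiff ℝ 1 σ := hσ.of_le one_le_two
  have hgc : ContinuousOn g (Icc 0 T) := hg.continuousOn (pos_of_gt hr)
  have hsub : Icc 0 t ⊆ Icc 0 T := Icc_subset_Icc_right ht.2
  obtain ⟨K, hK⟩ := ha.exists_lipschitzOnWith hφ hb hσ₁ hgc
  have hdrift : ∫ u in (0 : ℝ)..t, flowJacobian σ φ (a u) (g u) * deriv a u =
      ∫ u in (0 : ℝ)..t, b (φ (a u) (g u)) := integral_congr_Ioo_of_le ht.1 fun u hu => by
    have hu' : u ∈ Ioo 0 T := Ioo_subset_Ioo_right ht.2 hu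
    have hau := ((ha.hasDerivWithinAt hφ hb hσ₁ hgc (Ioo_subset_Icc_self hu')).hasDerivAt
      (Icc_mem_nhds hu'.1 hu'.2)).deriv
    simp only [hau, flowJacobian_mul_fsb]
  refine ⟨_, hφ.hasSymmInt hσ (hK.mono hsub) (hg.mono hsub) hr ht.1, ?_⟩
  rw [hdrift, ha.apply_zero (ht.1.trans ht.2), hg0, hφ.map_zero]
  ring

end SolvesPullbackEq

end Equation

section LipschitzTransfer

lemma abs_sub_le_of_hasDerivAt_mul {d e ψ ψ' h : ℝ → ℝ} {x y δ A B : ℝ}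
    (hd : ∀ w, HasDerivAt d (e w) w) (hψ : ∀ w, HasDerivAt ψ (ψ' w) w)
    (hh : ∀ w, HasDerivAt h (ψ w * e w) w) (hδ : ∀ w ∈ uIcc x y, |d w - d x| ≤ δ)
    (hA : |ψ y| ≤ A) (hB : ∀ w ∈ uIcc x y, |ψ' w| ≤ B) :
    |h y - h x| ≤ (A + B * |y - x|) * δ := by
  have hB0 : 0 ≤ B := (abs_nonneg _).trans (hB x left_mem_uIcc)
  have hparts := abs_sub_le_mul_of_hasDerivAt (Q := fun w => h w - ψ w * (d w - d x))
    (Q₁ := fun w => -(ψ' w * (d w - d x))) (x := x) (y := y) (B := B * δ)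
    (fun w => ((hh w).sub ((hψ w).mul ((hd w).sub_const (d x)))).congr_deriv (by ring))
    fun w hw => by
      rw [abs_neg, abs_mul]
      exact mul_le_mul (hB w hw) (hδ w hw) (abs_nonneg _) hB0
  have hbdry : |ψ y * (d y - d x)| ≤ A * δ := by
    rw [abs_mul]
    exact mul_le_mul hA (hδ y right_mem_uIcc) (abs_nonneg _) ((abs_nonneg _).trans hA)
  calc |h y - h x|
      = |(h y - ψ y * (d y - d x) - (h x - ψ x * (d x - d x))) + ψ y * (d y - d x)| := by
        congr 1; ring
    _ ≤ B * δ * |y - x| + A * δ := (abs_add_le _ _).trans (add_le_add hparts hbdry)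
    _ = (A + B * |y - x|) * δ := by ring

variable {d d₁ e ψ ψ₂ h h₁ : ℝ → ℝ → ℝ} {k g : ℝ → ℝ} {a b : ℝ} {K L : ℝ≥0}

lemma exists_lipschitzOnWith_comp_left (hd : ∀ x y, HasDerivAt (d · y) (d₁ x y) x)
    (hd₁ : Continuous fun p : ℝ × ℝ => d₁ p.1 p.2) (hk : LipschitzOnWith K k (Icc a b))
    (hg : ContinuousOn g (Icc a b)) :
    ∃ M : ℝ≥0, ∀ r ∈ Icc a b, LipschitzOnWith M (fun t => d (k t) (g r)) (Icc a b) := by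
  obtain ⟨M, hM⟩ := exists_lipschitzOnWith_left hd hd₁
    (isCompact_Icc.image_of_continuousOn hk.continuousOn) (convex_image_Icc hk.continuousOn)
    (isCompact_Icc.image_of_continuousOn hg)
  exact ⟨M * K, fun r hr => (hM _ (mem_image_of_mem g hr)).comp hk (mapsTo_image k _)⟩

-- By the intermediate value theorem, every point between `g s` and `g t` is a value of `g`.
lemma exists_forall_abs_sub_le_of_lipschitzOnWith (hd : ∀ x y, HasDerivAt (d · y) (d₁ x y) x)
    (hd₁ : Continuous fun p : ℝ × ℝ => d₁ p.1 p.2) (hk : LipschitzOnWith K k (Icc a b))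
    (hg : ContinuousOn g (Icc a b)) (hL : LipschitzOnWith L (fun t => d (k t) (g t)) (Icc a b)) :
    ∃ M : ℝ≥0, ∀ s ∈ Icc a b, ∀ t ∈ Icc a b, ∀ w ∈ uIcc (g s) (g t),
      |d (k s) w - d (k s) (g s)| ≤ M * |t - s| := by
  obtain ⟨M, hM⟩ := exists_lipschitzOnWith_comp_left hd hd₁ hk hg
  refine ⟨M + L, fun s hs t ht w hw => ?_⟩
  have hst : uIcc s t ⊆ Icc a b := ordConnected_Icc.uIcc_subset hs ht
  obtain ⟨r, hr, rfl⟩ := intermediate_value_uIcc (hg.mono hst) hw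
  calc |d (k s) (g r) - d (k s) (g s)|
      = |(d (k s) (g r) - d (k r) (g r)) + (d (k r) (g r) - d (k s) (g s))| := by
        rw [sub_add_sub_cancel]
    _ ≤ M * |s - r| + L * |r - s| := (abs_add_le _ _).trans <| add_le_add
        ((hM r (hst hr)).dist_le_mul s hs r (hst hr)) (hL.dist_le_mul r (hst hr) s hs)
    _ = (M + L) * |r - s| := by rw [abs_sub_comm s r, add_mul]
    _ ≤ (M + L : ℝ≥0) * |t - s| :=
        mul_le_mul_of_nonneg_left (abs_sub_left_of_mem_uIcc hr) (M + L).coe_nonneg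

theorem exists_lipschitzOnWith_of_hasDerivAt_mul (hd : ∀ x y, HasDerivAt (d · y) (d₁ x y) x)
    (hd₁ : Continuous fun p : ℝ × ℝ => d₁ p.1 p.2) (hd' : ∀ x y, HasDerivAt (d x) (e x y) y)
    (hh : ∀ x y, HasDerivAt (h · y) (h₁ x y) x) (hh₁ : Continuous fun p : ℝ × ℝ => h₁ p.1 p.2)
    (hh' : ∀ x y, HasDerivAt (h x) (ψ x y * e x y) y)
    (hψ : ∀ x y, HasDerivAt (ψ x) (ψ₂ x y) y) (hψc : Continuous fun p : ℝ × ℝ => ψ p.1 p.2)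
    (hψ₂ : Continuous fun p : ℝ × ℝ => ψ₂ p.1 p.2) (hk : LipschitzOnWith K k (Icc a b))
    (hg : ContinuousOn g (Icc a b)) (hL : LipschitzOnWith L (fun t => d (k t) (g t)) (Icc a b)) :
    ∃ M : ℝ≥0, LipschitzOnWith M (fun t => h (k t) (g t)) (Icc a b) := by
  have hgc : IsCompact (g '' Icc a b) := isCompact_Icc.image_of_continuousOn hg
  have hcompact : IsCompact ((k '' Icc a b) ×ˢ (g '' Icc a b)) :=
    (isCompact_Icc.image_of_continuousOn hk.continuousOn).prod hgc
  obtain ⟨A, hA⟩ := hcompact.exists_bound_of_continuousOn hψc.continuousOn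
  obtain ⟨B, hB⟩ := hcompact.exists_bound_of_continuousOn hψ₂.continuousOn
  obtain ⟨δ, hδ⟩ := exists_forall_abs_sub_le_of_lipschitzOnWith hd hd₁ hk hg hL
  obtain ⟨M, hM⟩ := exists_lipschitzOnWith_comp_left hh hh₁ hk hg
  refine ⟨M + (A.toNNReal + B.toNNReal * (Metric.diam (g '' Icc a b)).toNNReal) * δ,
    LipschitzOnWith.of_dist_le_mul fun t ht s hs => ?_⟩
  have hright := abs_sub_le_of_hasDerivAt_mul (hd' (k s)) (hψ (k s)) (hh' (k s)) (hδ s hs t ht)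
    ((hA (k s, g t) ⟨mem_image_of_mem k hs, mem_image_of_mem g ht⟩).trans A.le_coe_toNNReal)
    fun w hw => (hB (k s, w) ⟨mem_image_of_mem k hs, (convex_image_Icc hg).ordConnected.uIcc_subset
      (mem_image_of_mem g hs) (mem_image_of_mem g ht) hw⟩).trans B.le_coe_toNNReal
  have hdiam : |g t - g s| ≤ (Metric.diam (g '' Icc a b)).toNNReal :=
    (Metric.dist_le_diam_of_mem hgc.isBounded (mem_image_of_mem g ht)
      (mem_image_of_mem g hs)).trans (Real.le_coe_toNNReal _)
  calc dist (h (k t) (g t)) (h (k s) (g s))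
      ≤ dist (h (k t) (g t)) (h (k s) (g t)) + dist (h (k s) (g t)) (h (k s) (g s)) :=
        dist_triangle _ _ _
    _ ≤ M * |t - s| + (A.toNNReal + B.toNNReal * |g t - g s|) * (δ * |t - s|) :=
        add_le_add ((hM t ht).dist_le_mul t ht s hs) hright
    _ ≤ M * |t - s| + (A.toNNReal + B.toNNReal * (Metric.diam (g '' Icc a b)).toNNReal)
          * (δ * |t - s|) := by gcongr
    _ = _ := by rw [Real.dist_eq]; push_cast; ring

-- The `y`-derivative of `φ (F x y) (-y)` is `J (F x y) (-y) * (∂F/∂y - σ (F x y))`, the second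
-- factor being the `y`-derivative of `F x y - ∫ η in 0..y, σ (F x η)`.
theorem IsFlow.exists_lipschitzOnWith_pullback {σ : ℝ → ℝ} {φ F : ℝ → ℝ → ℝ} (hφ : IsFlow σ φ)
    (hσ : ContDiff ℝ 2 σ) (hF : IsC13 F) (hk : LipschitzOnWith K k (Icc a b))
    (hg : ContinuousOn g (Icc a b)) (hL : LipschitzOnWith L
      (fun t => F (k t) (g t) - ∫ η in (0 : ℝ)..g t, σ (F (k t) η)) (Icc a b)) :
    ∃ M : ℝ≥0, LipschitzOnWith M (fun t => φ (F (k t) (g t)) (-g t)) (Icc a b) := by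
  have hσ₁ : ContDiff ℝ 1 σ := hσ.of_le one_le_two
  have hP := hF.integral_comp hσ
  have hFc := hF.continuous
  have hF' := hF.continuous_deriv_right
  have hJ := hφ.continuous_jacobian hσ₁
  have hJ₁ := hφ.continuous_jacobian_deriv_left hσ
  have hJ₂ := hJ.mul (hφ.continuous_deriv_comp hσ₁)
  have hpull : Continuous fun p : ℝ × ℝ => (F p.1 p.2, -p.2) := by fun_prop
  refine exists_lipschitzOnWith_of_hasDerivAt_mul
    (h := fun x y => φ (F x y) (-y)) (ψ := fun x y => flowJacobian σ φ (F x y) (-y))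
    (fun x y => (hF.hasDerivAt_left x y).sub (hP.hasDerivAt_left x y))
    (hF.continuous_deriv_left.sub hP.continuous_deriv_left)
    (fun x y => (hF.hasDerivAt_right x y).sub
      (((hσ.continuous.comp hFc).comp (by fun_prop : Continuous fun η : ℝ => (x, η))
        ).integral_hasStrictDerivAt 0 y).hasDerivAt)
    (fun x y => (hφ.hasDerivAt_left hσ₁ _ (-y)).comp x (hF.hasDerivAt_left x y))
    ((hJ.comp hpull).mul hF.continuous_deriv_left) (fun x y => ?_)
    (fun x y => hasDerivAt_comp_of_continuous_partials (hφ.hasDerivAt_jacobian_left hσ)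
      (hφ.hasDerivAt_jacobian_right hσ₁) hJ₁ hJ₂ (hF.hasDerivAt_right x y) (hasDerivAt_neg y))
    (hJ.comp hpull) (((hJ₁.comp hpull).mul hF').add ((hJ₂.comp hpull).mul continuous_const))
    hk hg hL
  refine (hasDerivAt_comp_of_continuous_partials (hφ.hasDerivAt_left hσ₁) hφ.hasDerivAt_right hJ
    (hσ.continuous.comp (hφ.continuous hσ₁)) (hF.hasDerivAt_right x y)
    (hasDerivAt_neg y)).congr_deriv ?_
  rw [← hφ.jacobian_mul_apply hσ₁, mul_neg_one, ← sub_eq_add_neg, mul_sub]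
  rfl

end LipschitzTransfer

section Uniqueness

variable {b σ g y : ℝ → ℝ} {φ : ℝ → ℝ → ℝ} {ξ T : ℝ} {C r : ℝ≥0}

namespace SolvesSymmEq

lemma sub_eq_add_integral {G : ℝ → ℝ → ℝ} {k : ℝ → ℝ} {K : ℝ≥0} (hy : SolvesSymmEq b σ ξ g y T)
    (hby : ContinuousOn (fun u => b (y u)) (Icc 0 T)) (hG : IsC13 G)
    (hGy : ∀ u ∈ Icc 0 T, deriv (G (k u)) (g u) = σ (y u)) (hk : LipschitzOnWith K k (Icc 0 T))
    (hg : HolderOnWith C r g (Icc 0 T)) (hr : 1 / 3 < r) {t : ℝ} (ht : t ∈ Icc 0 T) :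
    y t - G (k t) (g t) = ξ - G (k 0) (g 0)
      + ∫ u in (0 : ℝ)..t, (b (y u) - deriv (G · (g u)) (k u) * deriv k u) := by
  have hsub : Icc 0 t ⊆ Icc 0 T := Icc_subset_Icc_right ht.2
  have hG₁ : ContinuousOn (fun u => deriv (G · (g u)) (k u)) (Icc 0 t) :=
    hG.continuous_deriv_left.comp_continuousOn
      ((hk.continuousOn.prodMk (hg.continuousOn (pos_of_gt hr))).mono hsub)
  obtain ⟨I, hI, heq⟩ := hy t ht
  have hI' := hI.unique ((hG.hasSymmInt (hk.mono hsub) (hg.mono hsub) hr ht.1).congr ht.1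
    fun u hu => hGy u (hsub hu))
  rw [heq, hI', integral_sub ((hby.mono hsub).intervalIntegrable_of_Icc ht.1)
    (intervalIntegrable_mul_deriv_of_lipschitzOnWith (hk.mono hsub) hG₁ ht.1)]
  ring

lemma exists_lipschitzOnWith_sub_integral {F : ℝ → ℝ → ℝ} {k : ℝ → ℝ} {K : ℝ≥0}
    (hy : SolvesSymmEq b σ ξ g y T) (hyF : ∀ t ∈ Icc 0 T, y t = F (k t) (g t)) (hb : Continuous b)
    (hσ : ContDiff ℝ 2 σ) (hF : IsC13 F) (hk : LipschitzOnWith K k (Icc 0 T))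
    (hg : HolderOnWith C r g (Icc 0 T)) (hr : 1 / 3 < r) :
    ∃ L : ℝ≥0, LipschitzOnWith L
      (fun t => F (k t) (g t) - ∫ η in (0 : ℝ)..g t, σ (F (k t) η)) (Icc 0 T) := by
  obtain hT | hT := lt_or_ge T 0
  · simp [Icc_eq_empty_of_lt hT]
  set P : ℝ → ℝ → ℝ := fun x y => ∫ η in (0 : ℝ)..y, σ (F x η)
  have hP : IsC13 P := hF.integral_comp hσ
  have hP' : ∀ x y, deriv (P x) y = σ (F x y) := fun x y =>
    Continuous.deriv_integral (f := fun η => σ (F x η)) (hσ.continuous.comp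
      (hF.continuous.comp (by fun_prop : Continuous fun η : ℝ => (x, η)))) 0 y
  have hkg : ContinuousOn (fun u => (k u, g u)) (Icc 0 T) :=
    hk.continuousOn.prodMk (hg.continuousOn (pos_of_gt hr))
  have hby : ContinuousOn (fun u => b (y u)) (Icc 0 T) :=
    ((hb.comp hF.continuous).comp_continuousOn hkg).congr fun u hu => congrArg b (hyF u hu)
  have hP₁ : ContinuousOn (fun u => deriv (P · (g u)) (k u)) (Icc 0 T) :=
    hP.continuous_deriv_left.comp_continuousOn hkg
  obtain ⟨A, hA⟩ := isCompact_Icc.exists_bound_of_continuousOn hby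
  obtain ⟨B, hB⟩ := isCompact_Icc.exists_bound_of_continuousOn hP₁
  refine ⟨A.toNNReal + B.toNNReal * K, lipschitzOnWith_of_eq_add_integral (ξ := ξ - P (k 0) (g 0))
    ((hby.intervalIntegrable_of_Icc hT).sub
      (intervalIntegrable_mul_deriv_of_lipschitzOnWith hk hP₁ hT)) (fun u hu => ?_) fun t ht => ?_⟩
  · have hu' : u ∈ Icc 0 T := Ioo_subset_Icc_self hu
    refine (abs_sub _ _).trans (add_le_add ((hA u hu').trans A.le_coe_toNNReal) ?_)
    rw [abs_mul]
    exact mul_le_mul ((hB u hu').trans B.le_coe_toNNReal)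
      (norm_deriv_le_of_lipschitzOn (Icc_mem_nhds hu.1 hu.2) hk) (abs_nonneg _)
      B.toNNReal.coe_nonneg
  · rw [← hyF t ht]
    exact hy.sub_eq_add_integral hby hP
      (fun u hu => (hP' _ _).trans (congrArg σ (hyF u hu).symm)) hk hg hr ht

theorem solvesPullbackEq {z : ℝ → ℝ} {K : ℝ≥0} (hy : SolvesSymmEq b σ ξ g y T)
    (hyz : ∀ t ∈ Icc 0 T, y t = φ (z t) (g t)) (hφ : IsFlow σ φ) (hb : Continuous b)
    (hσ : ContDiff ℝ 2 σ) (hz : LipschitzOnWith K z (Icc 0 T)) (hg : HolderOnWith C r g (Icc 0 T))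
    (hr : 1 / 3 < r) (hg0 : g 0 = 0) : SolvesPullbackEq b σ φ ξ g z T := by
  refine ⟨hz.continuousOn, fun t ht => ?_⟩
  have hσ₁ : ContDiff ℝ 1 σ := hσ.of_le one_le_two
  have hT : 0 ≤ T := ht.1.trans ht.2
  have hzg : ContinuousOn (fun u => (z u, g u)) (Icc 0 T) :=
    hz.continuousOn.prodMk (hg.continuousOn (pos_of_gt hr))
  have hby : ContinuousOn (fun u => b (y u)) (Icc 0 T) :=
    ((hb.comp (hφ.continuous hσ₁)).comp_continuousOn hzg).congr fun u hu => congrArg b (hyz u hu)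
  have hJ : ContinuousOn (fun u => flowJacobian σ φ (z u) (g u)) (Icc 0 T) :=
    (hφ.continuous_jacobian hσ₁).comp_continuousOn hzg
  have heq : ∀ s ∈ Icc 0 T, 0 = ξ - z 0 + ∫ u in (0 : ℝ)..s,
      (b (y u) - flowJacobian σ φ (z u) (g u) * deriv z u) := fun s hs => by
    have := hy.sub_eq_add_integral hby (hφ.isC13 hσ) (fun u hu => by
      rw [(hφ.hasDerivAt_right _ _).deriv, hyz u hu]) hz hg hr hs
    simpa only [hyz s hs, sub_self, hg0, hφ.map_zero, (hφ.hasDerivAt_left hσ₁ _ _).deriv] using this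
  have hz0 : z 0 = ξ := by
    have := heq 0 (left_mem_Icc.2 hT)
    rw [integral_same] at this
    linarith
  have hderiv : ∀ᵐ u, u ∈ Ioc 0 T → deriv z u = fsb b σ φ (z u) (g u) := by
    filter_upwards [ae_eq_zero_of_forall_integral_eq_zero ((hby.intervalIntegrable_of_Icc hT).sub
      (intervalIntegrable_mul_deriv_of_lipschitzOnWith hz hJ hT))
      (fun s hs => by simpa [hz0] using (heq s hs).symm)] with u hu hmem
    have hbu := sub_eq_zero.1 (hu hmem)
    rw [hyz u (Ioc_subset_Icc_self hmem), ← flowJacobian_mul_fsb b] at hbu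
    exact (mul_left_cancel₀ (flowJacobian_ne_zero σ φ _ _) hbu).symm
  rw [← hz0]
  exact eq_add_integral_of_ae_deriv_eq hz hderiv ht

theorem eqOn (hy : SolvesSymmEq b σ ξ g y T) {F : ℝ → ℝ → ℝ} {k a : ℝ → ℝ} {K : ℝ≥0}
    (hyF : ∀ t ∈ Icc 0 T, y t = F (k t) (g t)) (ha : SolvesPullbackEq b σ φ ξ g a T)
    (hφ : IsFlow σ φ) (hb : ContDiff ℝ 1 b) (hσ : ContDiff ℝ 2 σ) (hF : IsC13 F)
    (hk : LipschitzOnWith K k (Icc 0 T)) (hg : HolderOnWith C r g (Icc 0 T)) (hr : 1 / 3 < r)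
    (hg0 : g 0 = 0) : EqOn y (fun t => φ (a t) (g t)) (Icc 0 T) := by
  have hgc : ContinuousOn g (Icc 0 T) := hg.continuousOn (pos_of_gt hr)
  obtain ⟨L, hL⟩ := hy.exists_lipschitzOnWith_sub_integral hyF hb.continuous hσ hF hk hg hr
  obtain ⟨M, hz⟩ := hφ.exists_lipschitzOnWith_pullback hσ hF hk hgc hL
  set z : ℝ → ℝ := fun t => φ (F (k t) (g t)) (-g t)
  have hyz : ∀ t ∈ Icc 0 T, y t = φ (z t) (g t) := fun t ht =>
    (hyF t ht).trans (hφ.apply_neg_apply (hσ.of_le one_le_two) _ _).symm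
  have hpull : SolvesPullbackEq b σ φ ξ g z T :=
    hy.solvesPullbackEq hyz hφ hb.continuous hσ hz hg hr hg0
  intro t ht
  rw [hyz t ht, ha.eqOn hpull hφ hb hσ hgc ht]

end SolvesSymmEq

end Uniqueness

section Main

theorem IsC13.exists_holderOnWith_comp {F : ℝ → ℝ → ℝ} (hF : IsC13 F) {k g : ℝ → ℝ} {a b : ℝ}
    {K C r : ℝ≥0} (hk : LipschitzOnWith K k (Icc a b)) (hg : HolderOnWith C r g (Icc a b))
    (hr : 0 < r) (hr' : r ≤ 1) :
    ∃ M : ℝ≥0, HolderOnWith M r (fun t => F (k t) (g t)) (Icc a b) := by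
  have hgc : ContinuousOn g (Icc a b) := hg.continuousOn hr
  obtain ⟨M, hM⟩ := exists_lipschitzOnWith_comp_left hF.hasDerivAt_left hF.continuous_deriv_left
    hk hgc
  obtain ⟨N, hN⟩ := exists_lipschitzOnWith_left (F := fun y x => F x y)
    (F₁ := fun y x => deriv (F x) y) (fun y x => hF.hasDerivAt_right x y)
    (hF.continuous_deriv_right.comp continuous_swap)
    (isCompact_Icc.image_of_continuousOn hgc) (convex_image_Icc hgc)
    (isCompact_Icc.image_of_continuousOn hk.continuousOn)
  obtain ⟨M', hleft⟩ : ∃ M' : ℝ≥0, ∀ u ∈ Icc a b,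
      HolderOnWith M' r (fun t => F (k t) (g u)) (Icc a b) :=
    ⟨_, fun u hu => (holderOnWith_one.2 (hM u hu)).of_le (D := (b - a).toNNReal)
      (fun x hx y hy => by
        rw [edist_dist]
        exact ENNReal.ofReal_le_ofReal (Real.dist_le_of_mem_Icc hx hy)) hr'⟩
  obtain ⟨N', hright⟩ : ∃ N' : ℝ≥0, ∀ s ∈ Icc a b,
      HolderOnWith N' r (fun t => F (k s) (g t)) (Icc a b) :=
    ⟨_, fun s hs => one_mul r ▸
      (holderOnWith_one.2 (hN (k s) (mem_image_of_mem k hs))).comp hg (mapsTo_image g _)⟩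
  refine ⟨M' + N', holderOnWith_of_dist_le fun s hs t ht => ?_⟩
  rw [NNReal.coe_add, add_mul]
  exact (dist_triangle _ (F (k t) (g s)) _).trans
    (add_le_add ((hleft s hs).dist_le hs ht) ((hright t ht).dist_le hs ht))

theorem stmt6_general {lam : ℝ} (hlam1 : 1 / 3 < lam) (hlam2 : lam ≤ 1) {g : ℝ → ℝ} {Cg : ℝ}
    (hg : ∀ s ∈ Icc (0 : ℝ) 1, ∀ t ∈ Icc (0 : ℝ) 1, |g t - g s| ≤ Cg * |t - s| ^ lam)
    (hg0 : g 0 = 0) {ξ : ℝ} {b σ : ℝ → ℝ} (hb : ContDiff ℝ 1 b) (hσ : ContDiff ℝ 2 σ)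
    {φ : ℝ → ℝ → ℝ} (hφ : IsFlow σ φ) {a : ℝ → ℝ} (ha : SolvesPullbackEq b σ φ ξ g a 1) :
    SolvesSymmEq b σ ξ g (fun t => φ (a t) (g t)) 1 ∧
    InClassC lam g (fun t => φ (a t) (g t)) ∧
    ∀ y : ℝ → ℝ, InClassC lam g y → SolvesSymmEq b σ ξ g y 1 →
      EqOn y (fun t => φ (a t) (g t)) (Icc 0 1) := by
  lift lam to ℝ≥0 using by linarith
  have hr : 1 / 3 < lam := by exact_mod_cast hlam1
  have hholder : HolderOnWith Cg.toNNReal lam g (Icc 0 1) :=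
    holderOnWith_of_dist_le fun t ht s hs => (hg s hs t ht).trans
      (mul_le_mul_of_nonneg_right Cg.le_coe_toNNReal (by positivity))
  obtain ⟨K, hK⟩ := ha.exists_lipschitzOnWith hφ hb.continuous (hσ.of_le one_le_two)
    (hholder.continuousOn (pos_of_gt hr))
  obtain ⟨M, hM⟩ := (hφ.isC13 hσ).exists_holderOnWith_comp hK hholder (pos_of_gt hr)
    (by exact_mod_cast hlam2)
  refine ⟨ha.solvesSymmEq hφ hb.continuous hσ hholder hr hg0,
    ⟨⟨M, fun s hs t ht => hM.dist_le ht hs⟩, φ, a, K, hφ.isC13 hσ, hK, fun _ _ => rfl⟩, ?_⟩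
  rintro y ⟨-, F, k, L, hF, hk, hyF⟩ hy
  exact hy.eqOn hyF ha hφ hb hσ hF hk hholder hr hg0

end Main

theorem stmt6
    (lam : ℝ) (hlam1 : 1/3 < lam) (hlam2 : lam < 1)
    (g : ℝ → ℝ) (Cg : ℝ)
    (hg : ∀ s ∈ Set.Icc (0:ℝ) 1, ∀ t ∈ Set.Icc (0:ℝ) 1, |g t - g s| ≤ Cg * |t - s| ^ lam)
    (hg0 : g 0 = 0)
    (ξ : ℝ) (b σ : ℝ → ℝ) (hb : CbN 1 b) (hσ : CbN 2 σ)
    (φ : ℝ → ℝ → ℝ) (hφ : ∀ α β : ℝ, φ α β = α + ∫ η in (0:ℝ)..β, σ (φ α η))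
    (a : ℝ → ℝ) (hacont : Continuous a)
    (ha : ∀ t : ℝ, a t = ξ + ∫ u in (0:ℝ)..t, fsb b σ φ (a u) (g u)) :
    (∀ t ∈ Set.Icc (0:ℝ) 1, ∃ I : ℝ,
      HasSymmInt (fun u => σ (φ (a u) (g u))) g t I ∧
      φ (a t) (g t) = ξ + (∫ u in (0:ℝ)..t, b (φ (a u) (g u))) + I) ∧
    InClassC lam g (fun t => φ (a t) (g t)) ∧
    (∀ y : ℝ → ℝ, InClassC lam g y →
      (∀ t ∈ Set.Icc (0:ℝ) 1, ∃ I : ℝ,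
        HasSymmInt (fun u => σ (y u)) g t I ∧
        y t = ξ + (∫ u in (0:ℝ)..t, b (y u)) + I) →
      ∀ t ∈ Set.Icc (0:ℝ) 1, y t = φ (a t) (g t)) := by
  obtain ⟨M, hM⟩ := hσ.2 0 (Nat.zero_le 2)
  exact stmt6_general hlam1 hlam2.le hg hg0 hb.1 hσ.1
    (isFlow_of_eq_add_integral hσ.1.continuous (by simpa using hM) hφ)
    ⟨hacont.continuousOn, fun t _ => ha t⟩
end

section
/- Let 1/3 < λ < 1, g ∈ C^λ₀([0,1];ℝ), ξ ∈ ℝ, b ∈ C_b¹(ℝ;ℝ) and σ ∈ C_b²(ℝ;ℝ) with inf σ > 0. Define F(x) = ∫₀^x dη/σ(η), let G = F⁻¹ be its inverse (F is a bijection of ℝ since σ is bounded above and below by positive constants), set b̃ = (b/σ)∘G and y₀ = F(ξ), and let y : [0,1] → ℝ be the unique continuous solution of y_t = y₀ + ∫₀^t b̃(y_u) du + g_t. Then G(y_t) = x_t(ξ,g) for all t ∈ [0,1], where x_·(ξ,g) is the Doss–Sussmann solution. -/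
/-- `F(x) = ∫₀ˣ dη/σ(η)`. -/
noncomputable def Ffun (σ : ℝ → ℝ) (x : ℝ) : ℝ := ∫ η in (0:ℝ)..x, (σ η)⁻¹

/-!
`F` straightens the flow of `σ`: `F (φ α β) = F α + β`. Along that flow the exponential factor in
`f_{σ,b}` is `σ (φ x 0) / σ (φ x y)`, so `F (a t)` has derivative `(b / σ) (φ (a t) (g t))`.
Hence `F (φ (a t) (g t)) = F (a t) + g t` solves the additive-noise equation of `y`. The drift
`(b / σ) ∘ G` is `C¹`, hence locally Lipschitz, and subtracting the noise turns two solutions into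
two solutions of one ordinary differential equation; so they agree.
-/

section IntegralEquations

open MeasureTheory Set

variable {E : Type*} [NormedAddCommGroup E] [NormedSpace ℝ E]

-- The primitive is continuous on the interval where `h` is integrable, and takes the junk value `0`
-- of a non-integrable integral off it.
lemma aestronglyMeasurable_primitive_of_bounded {h : ℝ → E} {M : ℝ} (hM : ∀ η, ‖h η‖ ≤ M)
    (x₀ : ℝ) : AEStronglyMeasurable fun x => ∫ η in x₀..x, h η := by
  classical
  set S : Set ℝ := {x | IntervalIntegrable h volume x₀ x}
  have hS : S.OrdConnected := ⟨fun x hx z hz w hw =>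
    hx.trans ((hx.symm.trans hz).mono_set
      (uIcc_subset_uIcc left_mem_uIcc (Icc_subset_uIcc hw)))⟩
  have hcont : ContinuousOn (fun x => ∫ η in x₀..x, h η) S := by
    refine (LipschitzOnWith.of_dist_le_mul (K := M.toNNReal) fun x hx z hz => ?_).continuousOn
    rw [Real.coe_toNNReal M ((norm_nonneg _).trans (hM 0)), dist_eq_norm, Real.dist_eq,
      intervalIntegral.integral_interval_sub_left hx hz]
    exact intervalIntegral.norm_integral_le_of_norm_le_const fun η _ => hM η
  have hpiece : (fun x => ∫ η in x₀..x, h η)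
      = S.piecewise (fun x => ∫ η in x₀..x, h η) fun _ => 0 := by
    ext x
    by_cases hx : x ∈ S
    · rw [piecewise_eq_of_mem _ _ _ hx]
    · rw [piecewise_eq_of_notMem _ _ _ hx]
      exact intervalIntegral.integral_undef hx
  rw [hpiece]
  exact .piecewise hS.measurableSet (hcont.aestronglyMeasurable hS.measurableSet)
    aestronglyMeasurable_const

lemma continuous_of_eq_add_integral_comp {σ : E → E} {p : ℝ → E} {x₀ : E} {M : ℝ}
    (hσ : Continuous σ) (hM : ∀ x, ‖σ x‖ ≤ M) (hp : ∀ t, p t = x₀ + ∫ u in (0 : ℝ)..t, σ (p u)) :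
    Continuous p := by
  have hmeas : AEStronglyMeasurable p :=
    funext hp ▸ aestronglyMeasurable_const.add
      (aestronglyMeasurable_primitive_of_bounded (fun u => hM (p u)) 0)
  have hint : ∀ s t : ℝ, IntervalIntegrable (fun u => σ (p u)) volume s t := fun s t =>
    (intervalIntegrable_const (c := M)).mono_fun (hσ.comp_aestronglyMeasurable hmeas).restrict
      (.of_forall fun u => (hM (p u)).trans (le_abs_self M))
  rw [funext hp]
  exact continuous_const.add (intervalIntegral.continuous_primitive hint 0)

variable [CompleteSpace E]

lemma hasDerivAt_of_eq_add_integral {f p : ℝ → E} {x₀ : E} (hf : Continuous f)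
    (hp : ∀ t, p t = x₀ + ∫ u in (0 : ℝ)..t, f u) (t : ℝ) : HasDerivAt p (f t) t := by
  rw [funext hp]
  exact (hf.integral_hasStrictDerivAt 0 t).hasDerivAt.const_add x₀

lemma eq_of_eq_add_integral_comp_add {h : E → E} {g u v : ℝ → E} {x₀ : E}
    (hh : LocallyLipschitz h) (hu : Continuous u) (hv : Continuous v)
    (hu_eq : ∀ t, u t = x₀ + (∫ s in (0 : ℝ)..t, h (u s)) + g t)
    (hv_eq : ∀ t, v t = x₀ + (∫ s in (0 : ℝ)..t, h (v s)) + g t) : u = v := by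
  have hasDerivAt_sub_noise : ∀ w : ℝ → E, Continuous w →
      (∀ t, w t = x₀ + (∫ s in (0 : ℝ)..t, h (w s)) + g t) →
      ∀ t, HasDerivAt (fun t => w t - g t) (h (w t - g t + g t)) t := fun w hw hw_eq t => by
    rw [sub_add_cancel]
    exact hasDerivAt_of_eq_add_integral (hh.continuous.comp hw)
      (fun s => sub_eq_iff_eq_add.2 (hw_eq s)) t
  ext t
  set I : Set ℝ := Icc (-(|t| + 1)) (|t| + 1)
  have hS : IsCompact (u '' I ∪ v '' I) :=
    (isCompact_Icc.image hu).union (isCompact_Icc.image hv)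
  obtain ⟨K, hK⟩ := hh.locallyLipschitzOn.exists_lipschitzOnWith_of_compact hS
  have heqOn : EqOn (fun t => u t - g t) (fun t => v t - g t) (Ioo (-(|t| + 1)) (|t| + 1)) := by
    refine ODE_solution_unique_of_mem_Ioo (t₀ := 0) (K := K) (v := fun r x => h (x + g r))
      (s := fun r => (· + g r) ⁻¹' (u '' I ∪ v '' I))
      (fun r _ x hx z hz => by simpa using hK hx hz)
      ⟨by linarith [abs_nonneg t], by positivity⟩
      (fun r hr => ⟨hasDerivAt_sub_noise u hu hu_eq r, ?_⟩)
      (fun r hr => ⟨hasDerivAt_sub_noise v hv hv_eq r, ?_⟩) ?_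
    · exact .inl ⟨r, Ioo_subset_Icc_self hr, (sub_add_cancel _ _).symm⟩
    · exact .inr ⟨r, Ioo_subset_Icc_self hr, (sub_add_cancel _ _).symm⟩
    · simp [hu_eq 0, hv_eq 0]
  exact sub_left_injective (heqOn (abs_lt.1 (lt_add_one |t|)))

end IntegralEquations

/-- `φ` is the flow of the scalar equation `p' = σ(p)`. As in the definition of `fsb`, the first
argument of `φ` is the initial value and the second one is the time. -/
structure IsFlow_s9 (σ : ℝ → ℝ) (φ : ℝ → ℝ → ℝ) : Prop where
  map_zero : ∀ α, φ α 0 = α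
  hasDerivAt : ∀ α β, HasDerivAt (φ α) (σ (φ α β)) β

lemma IsFlow_s9.of_integral_equation {σ : ℝ → ℝ} {φ : ℝ → ℝ → ℝ} {M : ℝ} (hσ : Continuous σ)
    (hM : ∀ x, |σ x| ≤ M) (hφ : ∀ α β, φ α β = α + ∫ η in (0 : ℝ)..β, σ (φ α η)) :
    IsFlow_s9 σ φ where
  map_zero α := by simpa using hφ α 0
  hasDerivAt α := hasDerivAt_of_eq_add_integral
    (hσ.comp (continuous_of_eq_add_integral_comp hσ hM (hφ α))) (hφ α)

section Lamperti

variable {b σ G : ℝ → ℝ} {φ : ℝ → ℝ → ℝ}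

lemma hasDerivAt_Ffun (hσ : Continuous σ) (hpos : ∀ x, 0 < σ x) (x : ℝ) :
    HasDerivAt (Ffun σ) (σ x)⁻¹ x :=
  ((hσ.inv₀ fun x => (hpos x).ne').integral_hasStrictDerivAt 0 x).hasDerivAt

lemma continuous_Ffun (hσ : Continuous σ) (hpos : ∀ x, 0 < σ x) : Continuous (Ffun σ) :=
  continuous_iff_continuousAt.2 fun x => (hasDerivAt_Ffun hσ hpos x).continuousAt

lemma strictMono_Ffun (hσ : Continuous σ) (hpos : ∀ x, 0 < σ x) : StrictMono (Ffun σ) :=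
  strictMono_of_deriv_pos fun x => by
    rw [(hasDerivAt_Ffun hσ hpos x).deriv]
    exact inv_pos.2 (hpos x)

lemma hasDerivAt_inverse_Ffun (hσ : Continuous σ) (hpos : ∀ x, 0 < σ x)
    (hGl : Function.LeftInverse G (Ffun σ)) (hGr : Function.RightInverse G (Ffun σ)) (x : ℝ) :
    HasDerivAt G (σ (G x)) x := by
  have hmono : Monotone G := fun x z hxz =>
    (strictMono_Ffun hσ hpos).le_iff_le.1 (by rwa [hGr x, hGr z])
  have hcont : Continuous G := hmono.continuous_of_surjective hGl.surjective
  simpa using HasDerivAt.of_local_left_inverse hcont.continuousAt (hasDerivAt_Ffun hσ hpos (G x))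
    (inv_ne_zero (hpos _).ne') (.of_forall hGr)

lemma contDiff_one_inverse_Ffun (hσ : Continuous σ) (hpos : ∀ x, 0 < σ x)
    (hGl : Function.LeftInverse G (Ffun σ)) (hGr : Function.RightInverse G (Ffun σ)) :
    ContDiff ℝ 1 G := by
  have hG := hasDerivAt_inverse_Ffun hσ hpos hGl hGr
  have hGd : Differentiable ℝ G := fun x => (hG x).differentiableAt
  refine contDiff_one_iff_deriv.2 ⟨hGd, ?_⟩
  rw [funext fun x => (hG x).deriv]
  exact hσ.comp hGd.continuous

namespace IsFlow_s9

lemma Ffun_apply (hφ : IsFlow_s9 σ φ) (hσ : Continuous σ) (hpos : ∀ x, 0 < σ x) (α β : ℝ) :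
    Ffun σ (φ α β) = Ffun σ α + β := by
  have hd : ∀ β, HasDerivAt (fun β => Ffun σ (φ α β)) 1 β := fun β =>
    ((hasDerivAt_Ffun hσ hpos _).comp β (hφ.hasDerivAt α β)).congr_deriv
      (inv_mul_cancel₀ (hpos _).ne')
  have hincr : ∫ _ in (0 : ℝ)..β, (1 : ℝ) = Ffun σ (φ α β) - Ffun σ (φ α 0) :=
    intervalIntegral.integral_eq_sub_of_hasDerivAt (fun x _ => hd x) intervalIntegrable_const
  rw [integral_one, sub_zero, hφ.map_zero] at hincr
  linarith

lemma exp_neg_integral_deriv (hφ : IsFlow_s9 σ φ) (hσ : ContDiff ℝ 1 σ) (hpos : ∀ x, 0 < σ x)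
    (α β : ℝ) : Real.exp (-∫ η in (0 : ℝ)..β, deriv σ (φ α η)) = σ α / σ (φ α β) := by
  have hlog : ∀ β, HasDerivAt (fun β => Real.log (σ (φ α β))) (deriv σ (φ α β)) β := fun β => by
    have hσφ := (hσ.differentiable one_ne_zero _).hasDerivAt.comp β (hφ.hasDerivAt α β)
    exact (hσφ.log (hpos _).ne').congr_deriv (mul_div_cancel_right₀ _ (hpos _).ne')
  have hcont : Continuous (φ α) :=
    continuous_iff_continuousAt.2 fun β => (hφ.hasDerivAt α β).continuousAt
  rw [intervalIntegral.integral_eq_sub_of_hasDerivAt (fun η _ => hlog η)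
    (((hσ.continuous_deriv le_rfl).comp hcont).intervalIntegrable 0 β), hφ.map_zero, neg_sub,
    Real.exp_sub, Real.exp_log (hpos _), Real.exp_log (hpos _)]

lemma fsb_eq (hφ : IsFlow_s9 σ φ) (hσ : ContDiff ℝ 1 σ) (hpos : ∀ x, 0 < σ x) (x y : ℝ) :
    fsb b σ φ x y = σ x * (b (φ x y) / σ (φ x y)) := by
  rw [fsb, hφ.exp_neg_integral_deriv hσ hpos, div_mul_eq_mul_div, mul_div_assoc]

lemma Ffun_apply_eq_add_integral_add (hφ : IsFlow_s9 σ φ) (hσ : ContDiff ℝ 1 σ)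
    (hpos : ∀ x, 0 < σ x) (hb : Continuous b) {a g : ℝ → ℝ} {ξ : ℝ} (ha : Continuous a)
    (hφag : Continuous fun t => φ (a t) (g t))
    (ha_eq : ∀ t, a t = ξ + ∫ u in (0 : ℝ)..t, fsb b σ φ (a u) (g u)) (t : ℝ) :
    Ffun σ (φ (a t) (g t)) =
      Ffun σ ξ + (∫ u in (0 : ℝ)..t, b (φ (a u) (g u)) / σ (φ (a u) (g u))) + g t := by
  have hσc := hσ.continuous
  have hdrift : Continuous fun u => b (φ (a u) (g u)) / σ (φ (a u) (g u)) :=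
    (hb.comp hφag).div (hσc.comp hφag) fun _ => (hpos _).ne'
  simp only [hφ.fsb_eq hσ hpos] at ha_eq
  have hFa : ∀ t, HasDerivAt (fun t => Ffun σ (a t)) (b (φ (a t) (g t)) / σ (φ (a t) (g t))) t :=
    fun t => ((hasDerivAt_Ffun hσc hpos _).comp t
      (hasDerivAt_of_eq_add_integral ((hσc.comp ha).mul hdrift) ha_eq t)).congr_deriv
        (inv_mul_cancel_left₀ (hpos _).ne' _)
  have ha0 : a 0 = ξ := by simpa using ha_eq 0
  rw [hφ.Ffun_apply hσc hpos, intervalIntegral.integral_eq_sub_of_hasDerivAt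
    (fun u _ => hFa u) (hdrift.intervalIntegrable 0 t), ha0, add_sub_cancel]

end IsFlow_s9

end Lamperti

theorem stmt9_general {g b σ a G y : ℝ → ℝ} {φ : ℝ → ℝ → ℝ} {ξ : ℝ}
    (hb : ContDiff ℝ 1 b) (hσ : ContDiff ℝ 1 σ) (hpos : ∀ x, 0 < σ x) (hφ : IsFlow_s9 σ φ)
    (hacont : Continuous a) (ha : ∀ t, a t = ξ + ∫ u in (0 : ℝ)..t, fsb b σ φ (a u) (g u))
    (hGl : Function.LeftInverse G (Ffun σ)) (hGr : Function.RightInverse G (Ffun σ))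
    (hycont : Continuous y)
    (hy : ∀ t, y t = Ffun σ ξ + (∫ u in (0 : ℝ)..t, b (G (y u)) / σ (G (y u))) + g t) (t : ℝ) :
    G (y t) = φ (a t) (g t) := by
  have hG : ContDiff ℝ 1 G := contDiff_one_inverse_Ffun hσ.continuous hpos hGl hGr
  have hdrift : ContDiff ℝ 1 fun x => b (G x) / σ (G x) :=
    (hb.comp hG).div (hσ.comp hG) fun _ => (hpos _).ne'
  have hgcont : Continuous g := by
    have hint := intervalIntegral.continuous_primitive (μ := MeasureTheory.volume)
      (fun s t => (hdrift.continuous.comp hycont).intervalIntegrable s t) 0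
    exact (hycont.sub (continuous_const.add hint)).congr fun t => sub_eq_of_eq_add' (hy t)
  have hFφ : Continuous fun t => Ffun σ (φ (a t) (g t)) := by
    simp only [hφ.Ffun_apply hσ.continuous hpos]
    exact ((continuous_Ffun hσ.continuous hpos).comp hacont).add hgcont
  have hφag : Continuous fun t => φ (a t) (g t) :=
    (hG.continuous.comp hFφ).congr fun t => hGl _
  have hyF : y = fun t => Ffun σ (φ (a t) (g t)) :=
    eq_of_eq_add_integral_comp_add hdrift.locallyLipschitz hycont hFφ hy fun t => by
      simpa only [hGl _] using
        hφ.Ffun_apply_eq_add_integral_add hσ hpos hb.continuous hacont hφag ha t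
  rw [hyF, hGl]

theorem stmt9
    (lam : ℝ) (hlam1 : 1/3 < lam) (hlam2 : lam < 1)
    (g : ℝ → ℝ) (Cg : ℝ)
    (hg : ∀ s ∈ Set.Icc (0:ℝ) 1, ∀ t ∈ Set.Icc (0:ℝ) 1, |g t - g s| ≤ Cg * |t - s| ^ lam)
    (hg0 : g 0 = 0)
    (ξ : ℝ) (b σ : ℝ → ℝ) (hb : CbN 1 b) (hσ : CbN 2 σ)
    (hσpos : ∃ c : ℝ, 0 < c ∧ ∀ x : ℝ, c ≤ σ x)
    (φ : ℝ → ℝ → ℝ) (hφ : ∀ α β : ℝ, φ α β = α + ∫ η in (0:ℝ)..β, σ (φ α η))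
    (a : ℝ → ℝ) (hacont : Continuous a)
    (ha : ∀ t : ℝ, a t = ξ + ∫ u in (0:ℝ)..t, fsb b σ φ (a u) (g u))
    -- `G = F⁻¹`, the inverse of the bijection `F`
    (G : ℝ → ℝ)
    (hGl : Function.LeftInverse G (Ffun σ)) (hGr : Function.RightInverse G (Ffun σ))
    -- `y`, the unique continuous solution of `y_t = F(ξ) + ∫₀ᵗ b̃(y_u) du + g_t`
    -- where `b̃ = (b/σ) ∘ G`
    (y : ℝ → ℝ) (hycont : Continuous y)
    (hy : ∀ t : ℝ,
      y t = Ffun σ ξ + (∫ u in (0:ℝ)..t, b (G (y u)) / σ (G (y u))) + g t) :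
    ∀ t ∈ Set.Icc (0:ℝ) 1, G (y t) = φ (a t) (g t) := by
  obtain ⟨c, hc, hcσ⟩ := hσpos
  obtain ⟨M, hM⟩ : ∃ M, ∀ x, |σ x| ≤ M := by simpa using hσ.2 0 (Nat.zero_le 2)
  exact fun t _ => stmt9_general hb.1 (hσ.1.of_le one_le_two) (fun x => hc.trans_le (hcσ x))
    (.of_integral_equation hσ.1.continuous hM hφ) hacont ha hGl hGr hycont hy t
end

section
/- Let 0 < H < 1. Define b₂(x,s,y,t) = 2(xy − xt − sy + st) and b₃(x,s,y,t) = 3(x²y − xy² − x²t + xt² − s²y + sy² + s²t − st²), and let C(2H,2) = 2H(2H−1)/2 and C(2H,3) = 2H(2H−1)(2H−2)/6 denote generalized binomial coefficients. Then there exists a constant C > 0 depending only on H such that for all 0 ≤ x, s, y, t ≤ 1 and all k, l ∈ ℕ with |k−l| ≥ 2: |D_H(s+k−1, x+k−1; t+l−1, y+l−1) − (1/2)|k−l|^{2H}·( C(2H,2)·b₂(x,s,y,t)/(k−l)² + C(2H,3)·b₃(x,s,y,t)/(k−l)³ )| ≤ C·|k−l|^{2H−4}. -/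
/-- `D_H(s,t;u,v) = (1/2)(|t−u|^{2H} + |s−v|^{2H} − |t−v|^{2H} − |s−u|^{2H})`,
the covariance `E[(B_t−B_s)(B_v−B_u)]` of increments of fractional Brownian motion. -/
noncomputable def DH (H s t u v : ℝ) : ℝ :=
  (1/2) * (|t - u| ^ (2*H) + |s - v| ^ (2*H) - |t - v| ^ (2*H) - |s - u| ^ (2*H))

/-- `b₂(x,s,y,t) = 2(xy − xt − sy + st)`. -/
def bb2 (x s y t : ℝ) : ℝ := 2 * (x*y - x*t - s*y + s*t)

/-- `b₃(x,s,y,t) = 3(x²y − xy² − x²t + xt² − s²y + sy² + s²t − st²)`. -/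
def bb3 (x s y t : ℝ) : ℝ :=
  3 * (x^2*y - x*y^2 - x^2*t + x*t^2 - s^2*y + s*y^2 + s^2*t - s*t^2)

/-!
The covariance `D_H` is half the mixed second difference of the kernel `d ↦ |k - l + d| ^ (2H)`.
Expanding `|a + d| ^ p = |a| ^ p (1 + d / a) ^ p` by the binomial series turns it into the mixed
differences of the monomials `d ^ i`. These vanish for `i = 0, 1` and are `b₂` and `b₃` for
`i = 2, 3`. The remainder is uniform because `|d / a|` stays away from the radius
of convergence `1`.
-/

theorem ring_choose_succ_right {K : Type*} [Field K] [CharZero K] (a : K) (n : ℕ) :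
    Ring.choose a (n + 1) = Ring.choose a n * (a - n) / (n + 1) := by
  rw [Ring.choose_eq_smul, Ring.choose_eq_smul, descPochhammer_succ_right, Polynomial.smeval_mul,
    Polynomial.smeval_sub, Polynomial.smeval_X, Polynomial.smeval_natCast, Nat.factorial_succ]
  have : (n : K) + 1 ≠ 0 := Nat.cast_add_one_ne_zero n
  simp only [smul_eq_mul, nsmul_eq_mul, pow_zero, pow_one, mul_one]
  push_cast
  field_simp

theorem ring_choose_two_right {K : Type*} [Field K] [CharZero K] (a : K) :
    Ring.choose a 2 = a * (a - 1) / 2 := by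
  rw [ring_choose_succ_right, Ring.choose_one_right]
  norm_num

theorem ring_choose_three_right {K : Type*} [Field K] [CharZero K] (a : K) :
    Ring.choose a 3 = a * (a - 1) * (a - 2) / 6 := by
  rw [ring_choose_succ_right, ring_choose_two_right]
  push_cast
  ring

theorem exists_abs_one_add_rpow_sub_sum_choose_le (p : ℝ) {r : ℝ} (hr : r < 1) (n : ℕ) :
    ∃ K : ℝ, 0 < K ∧ ∀ z : ℝ, |z| ≤ r →
      |(1 + z) ^ p - ∑ i ∈ Finset.range n, Ring.choose p i * z ^ i| ≤ K * |z| ^ n := by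
  obtain ⟨R, hR, hR1⟩ := exists_between (max_lt hr one_pos)
  obtain ⟨hrR, hR0⟩ := max_lt_iff.mp hR
  lift R to NNReal using hR0.le
  obtain ⟨a, ha, K, hK, hbound⟩ :=
    (Real.one_add_rpow_hasFPowerSeriesOnBall_zero (a := p)).uniform_geometric_approx'
      (r' := R) (by exact_mod_cast hR1)
  have ha0 : 0 < a := ha.1
  refine ⟨K * (a / R) ^ n, by positivity, fun z hz => ?_⟩
  have hzR : z ∈ Metric.ball (0 : ℝ) R := by
    simpa only [mem_ball_zero_iff, Real.norm_eq_abs] using hz.trans_lt hrR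
  have hpartial : (binomialSeries ℝ p).partialSum n z
      = ∑ i ∈ Finset.range n, Ring.choose p i * z ^ i := by
    simp only [FormalMultilinearSeries.partialSum, binomialSeries_apply, List.ofFn_const,
      List.prod_replicate, smul_eq_mul]
  calc |(1 + z) ^ p - ∑ i ∈ Finset.range n, Ring.choose p i * z ^ i|
      ≤ K * (a * (|z| / R)) ^ n := by
        simpa only [zero_add, hpartial, Real.norm_eq_abs] using hbound z hzR n
    _ = K * (a / R) ^ n * |z| ^ n := by ring

theorem abs_add_rpow_eq_mul {a : ℝ} (ha : a ≠ 0) (d p : ℝ) :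
    |a + d| ^ p = |a| ^ p * |1 + d / a| ^ p := by
  rw [← Real.mul_rpow (abs_nonneg _) (abs_nonneg _), ← abs_mul, mul_add, mul_one,
    mul_div_cancel₀ d ha]

theorem exists_abs_abs_add_rpow_sub_sum_choose_le (p : ℝ) {r : ℝ} (hr : r < 1) (n : ℕ) :
    ∃ K : ℝ, 0 < K ∧ ∀ a d : ℝ, a ≠ 0 → |d| ≤ r * |a| →
      |(|a + d| ^ p - ∑ i ∈ Finset.range n, Ring.choose p i * |a| ^ p / a ^ i * d ^ i)|
        ≤ K * |d| ^ n * |a| ^ (p - n) := by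
  obtain ⟨K, hK, hbound⟩ := exists_abs_one_add_rpow_sub_sum_choose_le p hr n
  refine ⟨K, hK, fun a d ha hd => ?_⟩
  have ha0 : 0 < |a| := abs_pos.mpr ha
  have hz : |d / a| ≤ r := by rwa [abs_div, div_le_iff₀ ha0]
  have hz1 : 0 ≤ 1 + d / a := by linarith [neg_le_of_abs_le hz]
  have hsum : ∑ i ∈ Finset.range n, Ring.choose p i * |a| ^ p / a ^ i * d ^ i
      = |a| ^ p * ∑ i ∈ Finset.range n, Ring.choose p i * (d / a) ^ i := by
    rw [Finset.mul_sum]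
    exact Finset.sum_congr rfl fun i _ => by ring
  calc |(|a + d| ^ p - ∑ i ∈ Finset.range n, Ring.choose p i * |a| ^ p / a ^ i * d ^ i)|
      = |a| ^ p * |(1 + d / a) ^ p - ∑ i ∈ Finset.range n, Ring.choose p i * (d / a) ^ i| := by
        rw [abs_add_rpow_eq_mul ha, abs_of_nonneg hz1, hsum, ← mul_sub, abs_mul,
          abs_of_nonneg (Real.rpow_nonneg ha0.le p)]
    _ ≤ |a| ^ p * (K * |d / a| ^ n) := by gcongr; exact hbound _ hz
    _ = K * |d| ^ n * |a| ^ (p - n) := by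
        rw [Real.rpow_sub_natCast ha0.ne', abs_div]
        ring

/-- The mixed second difference of `(ξ, η) ↦ f (ξ - η)` over the rectangle with opposite corners
`(x, t)` and `(s, y)`, as a linear functional of `f`. The arguments are ordered as in `bb2` and
`bb3`. -/
def mixedDiff (x s y t : ℝ) : (ℝ → ℝ) →ₗ[ℝ] ℝ where
  toFun f := f (x - t) + f (s - y) - f (x - y) - f (s - t)
  map_add' f g := by simp only [Pi.add_apply]; ring
  map_smul' c f := by simp only [Pi.smul_apply, smul_eq_mul, RingHom.id_apply]; ring

section mixedDiff

variable (x s y t : ℝ)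

theorem mixedDiff_apply (f : ℝ → ℝ) :
    mixedDiff x s y t f = f (x - t) + f (s - y) - f (x - y) - f (s - t) :=
  rfl

theorem mixedDiff_pow_zero : mixedDiff x s y t (fun d => d ^ 0) = 0 := by
  rw [mixedDiff_apply]
  ring

theorem mixedDiff_pow_one : mixedDiff x s y t (fun d => d ^ 1) = 0 := by
  rw [mixedDiff_apply]
  ring

theorem mixedDiff_pow_two : mixedDiff x s y t (fun d => d ^ 2) = bb2 x s y t := by
  rw [mixedDiff_apply, bb2]
  ring

theorem mixedDiff_pow_three : mixedDiff x s y t (fun d => d ^ 3) = bb3 x s y t := by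
  rw [mixedDiff_apply, bb3]
  ring

theorem mixedDiff_sum_mul {ι : Type*} (S : Finset ι) (c : ι → ℝ) (f : ι → ℝ → ℝ) :
    mixedDiff x s y t (fun d => ∑ i ∈ S, c i * f i d)
      = ∑ i ∈ S, c i * mixedDiff x s y t (f i) := by
  have hfun : (fun d => ∑ i ∈ S, c i * f i d) = ∑ i ∈ S, c i • f i := by
    ext d
    simp only [Finset.sum_apply, Pi.smul_apply, smul_eq_mul]
  simp only [hfun, map_sum, map_smul, smul_eq_mul]

theorem DH_add_eq_mixedDiff (H u v : ℝ) :
    DH H (s + u) (x + u) (t + v) (y + v)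
      = 1 / 2 * mixedDiff x s y t (fun d => |u - v + d| ^ (2 * H)) := by
  rw [DH, mixedDiff_apply]
  ring_nf

variable {x s y t}

theorem abs_mixedDiff_le {f : ℝ → ℝ} {ε : ℝ} (hx : x ∈ Set.Icc 0 1) (hs : s ∈ Set.Icc 0 1)
    (hy : y ∈ Set.Icc 0 1) (ht : t ∈ Set.Icc 0 1) (hf : ∀ d, |d| ≤ 1 → |f d| ≤ ε) :
    |mixedDiff x s y t f| ≤ 4 * ε := by
  have hxt := abs_le.mp (hf _ (Real.dist_le_of_mem_Icc_01 hx ht))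
  have hsy := abs_le.mp (hf _ (Real.dist_le_of_mem_Icc_01 hs hy))
  have hxy := abs_le.mp (hf _ (Real.dist_le_of_mem_Icc_01 hx hy))
  have hst := abs_le.mp (hf _ (Real.dist_le_of_mem_Icc_01 hs ht))
  rw [mixedDiff_apply, abs_le]
  constructor <;> linarith

end mixedDiff

theorem exists_abs_mixedDiff_abs_add_rpow_sub_sum_choose_le (p : ℝ) {ρ : ℝ} (hρ : 1 < ρ) (n : ℕ) :
    ∃ C : ℝ, 0 < C ∧
      ∀ x s y t : ℝ,
        x ∈ Set.Icc (0 : ℝ) 1 → s ∈ Set.Icc (0 : ℝ) 1 →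
        y ∈ Set.Icc (0 : ℝ) 1 → t ∈ Set.Icc (0 : ℝ) 1 →
        ∀ a : ℝ, ρ ≤ |a| →
          |mixedDiff x s y t (fun d => |a + d| ^ p)
            - ∑ i ∈ Finset.range n,
              Ring.choose p i * |a| ^ p / a ^ i * mixedDiff x s y t (fun d => d ^ i)|
          ≤ C * |a| ^ (p - n) := by
  have hρ0 : 0 < ρ := one_pos.trans hρ
  obtain ⟨K, hK, hbound⟩ :=
    exists_abs_abs_add_rpow_sub_sum_choose_le p (inv_lt_one_of_one_lt₀ hρ) n
  refine ⟨4 * K, by positivity, fun x s y t hx hs hy ht a ha => ?_⟩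
  have ha0 : a ≠ 0 := abs_pos.mp (hρ0.trans_le ha)
  have hremainder : ∀ d : ℝ, |d| ≤ 1 →
      |(|a + d| ^ p - ∑ i ∈ Finset.range n, Ring.choose p i * |a| ^ p / a ^ i * d ^ i)|
        ≤ K * |a| ^ (p - n) := fun d hd => by
    have hda : |d| ≤ ρ⁻¹ * |a| := hd.trans ((one_le_inv_mul₀ hρ0).mpr ha)
    calc _ ≤ K * |d| ^ n * |a| ^ (p - n) := hbound a d ha0 hda
      _ ≤ K * 1 * |a| ^ (p - n) := by gcongr; exact pow_le_one₀ (abs_nonneg d) hd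
      _ = K * |a| ^ (p - n) := by rw [mul_one]
  rw [← mixedDiff_sum_mul x s y t _ _ fun i d => d ^ i, ← map_sub, mul_assoc]
  exact abs_mixedDiff_le hx hs hy ht hremainder

theorem stmt16_general (H : ℝ) {ρ : ℝ} (hρ : 1 < ρ) :
    ∃ C : ℝ, 0 < C ∧
      ∀ x s y t : ℝ,
        x ∈ Set.Icc (0 : ℝ) 1 → s ∈ Set.Icc (0 : ℝ) 1 →
        y ∈ Set.Icc (0 : ℝ) 1 → t ∈ Set.Icc (0 : ℝ) 1 →
        ∀ u v : ℝ, ρ ≤ |u - v| →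
          |DH H (s + u) (x + u) (t + v) (y + v)
            - (1 / 2) * |u - v| ^ (2 * H) *
              ((2 * H * (2 * H - 1) / 2) * bb2 x s y t / (u - v) ^ 2
                + (2 * H * (2 * H - 1) * (2 * H - 2) / 6) * bb3 x s y t / (u - v) ^ 3)|
          ≤ C * |u - v| ^ (2 * H - 4) := by
  obtain ⟨C, hC, hbound⟩ :=
    exists_abs_mixedDiff_abs_add_rpow_sub_sum_choose_le (2 * H) hρ 4
  refine ⟨1 / 2 * C, by positivity, fun x s y t hx hs hy ht u v huv => ?_⟩
  have hmain : |u - v| ^ (2 * H) *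
        ((2 * H * (2 * H - 1) / 2) * bb2 x s y t / (u - v) ^ 2
          + (2 * H * (2 * H - 1) * (2 * H - 2) / 6) * bb3 x s y t / (u - v) ^ 3)
      = ∑ i ∈ Finset.range 4, Ring.choose (2 * H) i * |u - v| ^ (2 * H) / (u - v) ^ i
          * mixedDiff x s y t (fun d => d ^ i) := by
    simp only [Finset.sum_range_succ, Finset.sum_range_zero, mixedDiff_pow_zero,
      mixedDiff_pow_one, mixedDiff_pow_two, mixedDiff_pow_three, ring_choose_two_right,
      ring_choose_three_right]
    ring
  rw [DH_add_eq_mixedDiff, mul_assoc (1 / 2) (|u - v| ^ (2 * H)), hmain, ← mul_sub, abs_mul,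
    mul_assoc (1 / 2) C, abs_of_pos (one_half_pos (α := ℝ))]
  gcongr
  exact hbound x s y t hx hs hy ht (u - v) huv

theorem stmt16 (H : ℝ) (hH0 : 0 < H) (hH1 : H < 1) :
    ∃ C : ℝ, 0 < C ∧
      ∀ x s y t : ℝ,
        x ∈ Set.Icc (0:ℝ) 1 → s ∈ Set.Icc (0:ℝ) 1 →
        y ∈ Set.Icc (0:ℝ) 1 → t ∈ Set.Icc (0:ℝ) 1 →
        ∀ k l : ℕ, 1 ≤ k → 1 ≤ l → 2 ≤ |(k:ℝ) - (l:ℝ)| →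
          |DH H (s + (k:ℝ) - 1) (x + (k:ℝ) - 1) (t + (l:ℝ) - 1) (y + (l:ℝ) - 1)
            - (1/2) * |(k:ℝ) - (l:ℝ)| ^ (2*H) *
              ((2*H*(2*H - 1)/2) * bb2 x s y t / ((k:ℝ) - (l:ℝ))^2
                + (2*H*(2*H - 1)*(2*H - 2)/6) * bb3 x s y t / ((k:ℝ) - (l:ℝ))^3)|
          ≤ C * |(k:ℝ) - (l:ℝ)| ^ (2*H - 4) := by
  obtain ⟨C, hC, hbound⟩ := stmt16_general H one_lt_two
  exact ⟨C, hC, fun x s y t hx hs hy ht k l _ _ hkl => by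
    simpa only [add_sub_assoc, sub_sub_sub_cancel_right] using
      hbound x s y t hx hs hy ht (k - 1) (l - 1) (by rwa [sub_sub_sub_cancel_right])⟩
end

section
/- Let 0 < H < 1. Then there exists a constant C > 0 depending only on H such that for all integers k, l ≥ 1: |a†_{k,l}| ≤ C·|k−l|^{2H−3} whenever |k−l| ≥ 1, and |a†_{k,k}| ≤ C. -/
/-- `a†_{k,l} = E[(B_k−B_{k−1})·((1/2)(B_l−B_{l−1}) − ∫_{l−1}^l (B_u−B_{l−1})du)]`,
expressed through `D_H`. -/
noncomputable def adag (H : ℝ) (k l : ℕ) : ℝ :=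
  (1/2) * DH H ((k:ℝ) - 1) (k:ℝ) ((l:ℝ) - 1) (l:ℝ)
  - ∫ u in (0:ℝ)..1, DH H ((k:ℝ) - 1) (k:ℝ) ((l:ℝ) - 1) ((l:ℝ) - 1 + u)

/-!
With `p = 2H` and `Δ(x) = |x + 1|^p - |x|^p`, the covariance `D_H(k-1,k;l-1,l-1+u)` equals
`(Δ(k-l) - Δ(k-l-u)) / 2`, so `a†_{k,l}` is, up to the factor `-1/2`, the error of the trapezoidal
rule for `Δ` on `[k-l-1, k-l]`. When `|k-l| ≥ 2` this error is controlled by the second derivative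
of `Δ`, an increment of that of `|x|^p`, and hence by the third derivative of `|x|^p`, which is
`p(p-1)(p-2)|x|^(p-3)` up to sign. When `|k-l| ≤ 1` the four terms of `D_H` are bounded
individually.
-/

open Set MeasureTheory
open scoped fwdDiff

theorem abs_trapezoidal_error_le_of_hasDerivWithinAt {f f' f'' : ℝ → ℝ} {a b ζ : ℝ} {N : ℕ}
    (hab : a < b) (hN : 0 < N)
    (hf : ∀ x ∈ Icc a b, HasDerivWithinAt f (f' x) (Icc a b) x)
    (hf' : ∀ x ∈ Icc a b, HasDerivWithinAt f' (f'' x) (Icc a b) x)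
    (hζ : ∀ x ∈ Icc a b, |f'' x| ≤ ζ) :
    |trapezoidal_error f N a b| ≤ (b - a) ^ 3 * ζ / (12 * N ^ 2) := by
  have hu : UniqueDiffOn ℝ (Icc a b) := uniqueDiffOn_Icc hab
  have hd : ∀ x ∈ Icc a b, derivWithin f (Icc a b) x = f' x :=
    fun x hx => (hf x hx).derivWithin (hu x hx)
  have hdd : ∀ x ∈ Icc a b, HasDerivWithinAt (derivWithin f (Icc a b)) (f'' x) (Icc a b) x :=
    fun x hx => (hf' x hx).congr hd (hd x hx)
  have hbound : ∀ x, |iteratedDerivWithin 2 f (Icc a b) x| ≤ ζ := by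
    intro x
    rw [iteratedDerivWithin_succ, iteratedDerivWithin_one]
    by_cases hx : x ∈ Icc a b
    · rw [(hdd x hx).derivWithin (hu x hx)]
      exact hζ x hx
    · rw [derivWithin_zero_of_notMem_closure (by rwa [isClosed_Icc.closure_eq]), abs_zero]
      exact (abs_nonneg _).trans (hζ a (left_mem_Icc.2 hab.le))
  rw [← abs_of_pos (sub_pos.2 hab)]
  rw [← uIcc_of_le hab.le] at hf hdd hbound
  exact trapezoidal_error_le (fun x hx => (hf x hx).differentiableWithinAt)
    (fun x hx => (hdd x hx).differentiableWithinAt) hbound hN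

theorem abs_fwdDiff_le_of_hasDerivAt {f f' : ℝ → ℝ} {x h C : ℝ} (hh : 0 ≤ h)
    (hf : ∀ y ∈ Icc x (x + h), HasDerivAt f (f' y) y) (hC : ∀ y ∈ Icc x (x + h), |f' y| ≤ C) :
    |Δ_[h] f x| ≤ C * h := by
  have hle : x ≤ x + h := le_add_of_nonneg_right hh
  have hmv := (convex_Icc x (x + h)).norm_image_sub_le_of_norm_hasDerivWithin_le
    (fun y hy => (hf y hy).hasDerivWithinAt) hC (left_mem_Icc.2 hle) (right_mem_Icc.2 hle)
  rwa [add_sub_cancel_left, Real.norm_of_nonneg hh] at hmv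

theorem hasDerivAt_fwdDiff {f : ℝ → ℝ} {d₀ d₁ x h : ℝ} (h₀ : HasDerivAt f d₀ x)
    (h₁ : HasDerivAt f d₁ (x + h)) : HasDerivAt (Δ_[h] f) (d₁ - d₀) x :=
  (h₁.comp_add_const x h).sub h₀

theorem abs_trapezoidal_error_fwdDiff_le {f f₁ f₂ f₃ : ℝ → ℝ} {a b h ζ : ℝ} {N : ℕ}
    (hab : a < b) (hh : 0 ≤ h) (hN : 0 < N)
    (hf : ∀ x ∈ Icc a (b + h), HasDerivAt f (f₁ x) x)
    (hf₁ : ∀ x ∈ Icc a (b + h), HasDerivAt f₁ (f₂ x) x)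
    (hf₂ : ∀ x ∈ Icc a (b + h), HasDerivAt f₂ (f₃ x) x)
    (hζ : ∀ x ∈ Icc a (b + h), |f₃ x| ≤ ζ) :
    |trapezoidal_error (Δ_[h] f) N a b| ≤ (b - a) ^ 3 * (ζ * h) / (12 * N ^ 2) := by
  have hsub : ∀ x ∈ Icc a b, Icc x (x + h) ⊆ Icc a (b + h) :=
    fun x hx => Icc_subset_Icc hx.1 (by linarith [hx.2])
  have hderiv : ∀ {g g' : ℝ → ℝ}, (∀ x ∈ Icc a (b + h), HasDerivAt g (g' x) x) →
      ∀ x ∈ Icc a b, HasDerivWithinAt (Δ_[h] g) (Δ_[h] g' x) (Icc a b) x := by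
    intro g g' hg x hx
    have hle : x ≤ x + h := le_add_of_nonneg_right hh
    exact (hasDerivAt_fwdDiff (hg x (hsub x hx (left_mem_Icc.2 hle)))
      (hg (x + h) (hsub x hx (right_mem_Icc.2 hle)))).hasDerivWithinAt
  exact abs_trapezoidal_error_le_of_hasDerivWithinAt hab hN (hderiv hf) (hderiv hf₁)
    fun x hx => abs_fwdDiff_le_of_hasDerivAt hh (fun y hy => hf₂ y (hsub x hx hy))
      fun y hy => hζ y (hsub x hx hy)

-- Writing `|x| ^ (p - 2) * x` for the signed power `sign x * |x| ^ (p - 1)` lets the two derivative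
-- rules below be iterated on both half-lines at once.
theorem hasDerivAt_abs_rpow_of_ne_zero {x : ℝ} (hx : x ≠ 0) (p : ℝ) :
    HasDerivAt (fun y : ℝ => |y| ^ p) (p * (|x| ^ (p - 2) * x)) x := by
  refine ((hasDerivAt_abs hx).rpow_const (Or.inl (abs_ne_zero.2 hx))).congr_deriv ?_
  calc (SignType.sign x : ℝ) * p * |x| ^ (p - 1)
      = p * (|x| ^ (p - 2) * (SignType.sign x * |x|)) := by
        rw [show p - 1 = p - 2 + 1 by ring, Real.rpow_add_one (abs_ne_zero.2 hx)]
        ring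
    _ = p * (|x| ^ (p - 2) * x) := by rw [sign_mul_abs]

theorem hasDerivAt_abs_rpow_mul_self {x : ℝ} (hx : x ≠ 0) (p : ℝ) :
    HasDerivAt (fun y : ℝ => |y| ^ p * y) ((p + 1) * |x| ^ p) x := by
  refine ((hasDerivAt_abs_rpow_of_ne_zero hx p).mul (hasDerivAt_id x)).congr_deriv ?_
  have hsq : |x| ^ p = |x| ^ (p - 2) * x ^ 2 := by
    rw [← sq_abs x, ← Real.rpow_add_natCast (abs_ne_zero.2 hx)]
    norm_num
  rw [id, hsq]
  ring

theorem rpow_le_rpow_abs_mul_rpow {x y c : ℝ} (hx : 0 < x) (hy : 0 < y) (hxy : x ≤ c * y)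
    (hyx : y ≤ c * x) (q : ℝ) : x ^ q ≤ c ^ |q| * y ^ q := by
  have hc : 0 < c := pos_of_mul_pos_left (hx.trans_le hxy) hy.le
  rcases le_total 0 q with hq | hq
  · rw [abs_of_nonneg hq, ← Real.mul_rpow hc.le hy.le]
    exact Real.rpow_le_rpow hx.le hxy hq
  · calc x ^ q ≤ (y / c) ^ q :=
          Real.rpow_le_rpow_of_nonpos (by positivity) ((div_le_iff₀' hc).2 hyx) hq
      _ = c ^ |q| * y ^ q := by
          rw [abs_of_nonpos hq, Real.rpow_neg hc.le, Real.div_rpow hy.le hc.le, div_eq_inv_mul]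

theorem abs_trapezoidal_error_fwdDiff_abs_rpow_le {s : ℝ} (hs : 2 ≤ |s|) (p : ℝ) :
    |trapezoidal_error (Δ_[1] fun x : ℝ => |x| ^ p) 1 (s - 1) s| ≤
      |p * (p - 1) * (p - 2)| * (2 ^ |p - 3| * |s| ^ (p - 3)) / 12 := by
  have hdist : ∀ x ∈ Icc (s - 1) (s + 1), |x| ≤ 2 * |s| ∧ |s| ≤ 2 * |x| := by
    intro x hx
    have hxs : |x - s| ≤ 1 := abs_le.2 ⟨by linarith [hx.1], by linarith [hx.2]⟩
    have h₁ := abs_sub_abs_le_abs_sub x s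
    have h₂ := abs_sub_abs_le_abs_sub s x
    rw [abs_sub_comm] at h₂
    exact ⟨by linarith, by linarith⟩
  have hpos : ∀ x ∈ Icc (s - 1) (s + 1), 0 < |x| := fun x hx => by linarith [hdist x hx]
  have hne : ∀ x ∈ Icc (s - 1) (s + 1), x ≠ 0 := fun x hx => abs_pos.1 (hpos x hx)
  have herr := abs_trapezoidal_error_fwdDiff_le (N := 1) (sub_one_lt s) zero_le_one one_pos
    (fun x hx => hasDerivAt_abs_rpow_of_ne_zero (hne x hx) p)
    (fun x hx => (hasDerivAt_abs_rpow_mul_self (hne x hx) (p - 2)).const_mul p)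
    (fun x hx => ((hasDerivAt_abs_rpow_of_ne_zero (hne x hx) (p - 2)).const_mul
      (p - 2 + 1)).const_mul p)
    (ζ := |p * (p - 1) * (p - 2)| * (2 ^ |p - 3| * |s| ^ (p - 3))) fun x hx => ?_
  · simpa using herr
  calc |p * ((p - 2 + 1) * ((p - 2) * (|x| ^ (p - 2 - 2) * x)))|
      = |p * (p - 1) * (p - 2) * (|x| ^ (p - 2 - 2) * x)| := by ring_nf
    _ = |p * (p - 1) * (p - 2)| * |x| ^ (p - 3) := by
        rw [abs_mul _ (_ * x), abs_mul _ x, abs_of_nonneg (by positivity : 0 ≤ |x| ^ (p - 2 - 2)),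
          ← Real.rpow_add_one (hpos x hx).ne']
        ring_nf
    _ ≤ |p * (p - 1) * (p - 2)| * (2 ^ |p - 3| * |s| ^ (p - 3)) := by
        gcongr
        exact rpow_le_rpow_abs_mul_rpow (hpos x hx) (by linarith) (hdist x hx).1 (hdist x hx).2 _

theorem DH_add_right_eq_fwdDiff (H s h u v : ℝ) :
    DH H s (s + h) u v =
      1 / 2 * (Δ_[h] (fun x => |x| ^ (2 * H)) (s - u) -
        Δ_[h] (fun x => |x| ^ (2 * H)) (s - v)) := by
  simp only [DH, fwdDiff, add_sub_right_comm s h]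
  ring

theorem adag_eq_trapezoidal_error {H : ℝ} (hH : 0 ≤ H) (k l : ℕ) :
    adag H k l = -(1 / 2) *
      trapezoidal_error (Δ_[1] fun x : ℝ => |x| ^ (2 * H)) 1 ((k : ℝ) - l - 1) ((k : ℝ) - l) := by
  set F : ℝ → ℝ := Δ_[1] fun x : ℝ => |x| ^ (2 * H)
  set n : ℝ := (k : ℝ) - l
  have hDH : ∀ u : ℝ, DH H ((k : ℝ) - 1) k ((l : ℝ) - 1) ((l : ℝ) - 1 + u) =
      1 / 2 * (F n - F (n - u)) := by
    intro u
    have h := DH_add_right_eq_fwdDiff H (k - 1) 1 (l - 1) (l - 1 + u)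
    rwa [sub_add_cancel, sub_sub_sub_cancel_right, ← sub_sub, sub_sub_sub_cancel_right] at h
  have hcont : Continuous F := by
    have hφ : Continuous fun x : ℝ => |x| ^ (2 * H) :=
      continuous_abs.rpow_const fun _ => Or.inr (by positivity)
    exact (hφ.comp (continuous_add_const 1)).sub hφ
  have hint : IntervalIntegrable (fun u => F (n - u)) volume 0 1 :=
    (hcont.comp (continuous_const.sub continuous_id)).intervalIntegrable 0 1
  have hl : DH H ((k : ℝ) - 1) k ((l : ℝ) - 1) l = 1 / 2 * (F n - F (n - 1)) := by
    rw [← hDH 1, sub_add_cancel]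
  simp only [adag, hl, hDH, intervalIntegral.integral_const_mul,
    intervalIntegral.integral_sub intervalIntegrable_const hint, intervalIntegral.integral_const,
    intervalIntegral.integral_comp_sub_left F n, trapezoidal_error, trapezoidal_integral_one,
    sub_zero, one_smul, sub_sub_cancel]
  ring

theorem abs_adag_le_of_two_le {H : ℝ} (hH : 0 ≤ H) {k l : ℕ} (hkl : 2 ≤ |(k : ℝ) - l|) :
    |adag H k l| ≤ |2 * H * (2 * H - 1) * (2 * H - 2)| * 2 ^ |2 * H - 3| / 24 *
      |(k : ℝ) - l| ^ (2 * H - 3) := by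
  have herr := abs_trapezoidal_error_fwdDiff_abs_rpow_le hkl (2 * H)
  rw [adag_eq_trapezoidal_error hH, abs_mul, abs_neg, abs_of_pos one_half_pos]
  linarith

theorem abs_DH_le {H R s t u v : ℝ} (hH : 0 ≤ H) (htu : |t - u| ≤ R) (hsv : |s - v| ≤ R)
    (htv : |t - v| ≤ R) (hsu : |s - u| ≤ R) : |DH H s t u v| ≤ R ^ (2 * H) := by
  have hbound : ∀ {x : ℝ}, |x| ≤ R → 0 ≤ |x| ^ (2 * H) ∧ |x| ^ (2 * H) ≤ R ^ (2 * H) :=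
    fun hx => ⟨by positivity, Real.rpow_le_rpow (abs_nonneg _) hx (by positivity)⟩
  rw [DH, abs_le]
  constructor <;> linarith [hbound htu, hbound hsv, hbound htv, hbound hsu]

theorem abs_adag_le {H : ℝ} (hH : 0 ≤ H) (k l : ℕ) :
    |adag H k l| ≤ 3 / 2 * (|(k : ℝ) - l| + 1) ^ (2 * H) := by
  set M : ℝ := (|(k : ℝ) - l| + 1) ^ (2 * H)
  have hDH : ∀ u ∈ Icc (0 : ℝ) 1,
      |DH H ((k : ℝ) - 1) k ((l : ℝ) - 1) ((l : ℝ) - 1 + u)| ≤ M := by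
    rintro u ⟨hu0, hu1⟩
    have hn := abs_le.1 (le_refl |(k : ℝ) - l|)
    apply abs_DH_le hH <;> rw [abs_le] <;> constructor <;> linarith
  have hl : |DH H ((k : ℝ) - 1) k ((l : ℝ) - 1) l| ≤ M := by
    simpa using hDH 1 (right_mem_Icc.2 zero_le_one)
  have hint :
      |∫ u in (0 : ℝ)..1, DH H ((k : ℝ) - 1) k ((l : ℝ) - 1) ((l : ℝ) - 1 + u)| ≤ M := by
    have hnorm := intervalIntegral.norm_integral_le_of_norm_le_const
      (f := fun u => DH H ((k : ℝ) - 1) k ((l : ℝ) - 1) ((l : ℝ) - 1 + u)) (a := 0) (b := 1)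
      fun u hu => hDH u (Ioc_subset_Icc_self (by rwa [uIoc_of_le zero_le_one] at hu))
    rwa [sub_zero, abs_one, mul_one] at hnorm
  calc |adag H k l|
      ≤ |1 / 2 * DH H ((k : ℝ) - 1) k ((l : ℝ) - 1) l| +
        |∫ u in (0 : ℝ)..1, DH H ((k : ℝ) - 1) k ((l : ℝ) - 1) ((l : ℝ) - 1 + u)| := abs_sub _ _
    _ ≤ 1 / 2 * M + M := by
        rw [abs_mul, abs_of_pos one_half_pos]
        gcongr
    _ = 3 / 2 * M := by ring

theorem abs_natCast_sub_natCast_eq_one_or_two_le {k l : ℕ} (h : k ≠ l) :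
    |(k : ℝ) - l| = 1 ∨ 2 ≤ |(k : ℝ) - l| := by
  have hint : |(k : ℤ) - l| = 1 ∨ 2 ≤ |(k : ℤ) - l| := by
    have := abs_pos.2 (sub_ne_zero.2 (Nat.cast_injective.ne h : (k : ℤ) ≠ l))
    omega
  exact_mod_cast hint

theorem stmt18_general {H : ℝ} (hH : 0 ≤ H) :
    ∃ C : ℝ, 0 < C ∧ ∀ k l : ℕ,
      (k ≠ l → |adag H k l| ≤ C * |(k : ℝ) - l| ^ (2 * H - 3)) ∧ |adag H k k| ≤ C := by
  set A : ℝ := 3 / 2 * 2 ^ (2 * H)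
  set B : ℝ := |2 * H * (2 * H - 1) * (2 * H - 2)| * 2 ^ |2 * H - 3| / 24
  have hA : 0 < A := by positivity
  have hnear : ∀ k l : ℕ, |(k : ℝ) - l| ≤ 1 → |adag H k l| ≤ max A B := by
    intro k l hkl
    grw [abs_adag_le hH k l, hkl, one_add_one_eq_two, ← le_max_left A B]
  refine ⟨max A B, lt_max_of_lt_left hA, fun k l => ⟨fun hkl => ?_, hnear k k (by simp)⟩⟩
  rcases abs_natCast_sub_natCast_eq_one_or_two_le hkl with hone | htwo
  · rw [hone, Real.one_rpow, mul_one]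
    exact hnear k l hone.le
  · grw [abs_adag_le_of_two_le hH htwo, ← le_max_right A B]

theorem stmt18 (H : ℝ) (hH0 : 0 < H) (hH1 : H < 1) :
    ∃ C : ℝ, 0 < C ∧
      ∀ k l : ℕ, 1 ≤ k → 1 ≤ l →
        (k ≠ l → |adag H k l| ≤ C * |(k:ℝ) - (l:ℝ)| ^ (2*H - 3)) ∧
        |adag H k k| ≤ C := by
  obtain ⟨C, hC, hbound⟩ := stmt18_general hH0.le
  exact ⟨C, hC, fun k l _ _ => hbound k l⟩
end

section
/- Let 0 < H < 1. Then for all integers k, l ≥ 1 one has the exact antisymmetry a†_{k,l} + a†_{l,k} = 0. -/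
/-!
Cut `[u, u + h]` at `u + x`. The reflection `r ↦ s + u + h - r` exchanges `[s, s + h]` and
`[u, u + h]`, so the increment over `[u + x, u + h]` has the same covariance with that over
`[s, s + h]` as the increment over `[s, s + (h - x)]` has with that over `[u, u + h]`. Replacing the
one by the other, the covariances of the two pieces with the increment over `[s, s + h]` add up to
that of the full increments, which does not depend on `x`; integrating over `x` gives the
antisymmetry.
-/

open MeasureTheory

/-- Covariance of `X t - X s` and `X v - X u` for a centred process `X` with stationary increments
and variogram `φ`, that is, `φ (t - s) = E[(X t - X s)²]`. Fractional Brownian motion has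
`φ r = |r| ^ (2 * H)`; the formula is used for any `φ`, whether or not it is a variogram. -/
noncomputable def incrementCov (φ : ℝ → ℝ) (s t u v : ℝ) : ℝ :=
  (1 / 2) * (φ (t - u) + φ (s - v) - φ (t - v) - φ (s - u))

/-- Covariance of `X (s + h) - X s` with the trapezoidal error
`h * (X u + X (u + h)) / 2 - ∫ r in u..u + h, X r`, both written through increments of `X`; it is
the paper's `a†` for steps of length `h` and variogram `φ`. -/
noncomputable def trapezoidalErrorCov (φ : ℝ → ℝ) (s u h : ℝ) : ℝ :=
  (h / 2) * incrementCov φ s (s + h) u (u + h)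
    - ∫ x in (0 : ℝ)..h, incrementCov φ s (s + h) u (u + x)

lemma incrementCov_add_adjacent (φ : ℝ → ℝ) (s t u v w : ℝ) :
    incrementCov φ s t u v + incrementCov φ s t v w = incrementCov φ s t u w := by
  unfold incrementCov
  ring

section IncrementCov

variable {φ : ℝ → ℝ}

lemma incrementCov_comm (hφ : φ.Even) (s t u v : ℝ) :
    incrementCov φ s t u v = incrementCov φ u v s t := by
  unfold incrementCov
  rw [← hφ (t - u), ← hφ (s - v), ← hφ (t - v), ← hφ (s - u)]
  ring_nf

lemma incrementCov_reflect (hφ : φ.Even) (c s t u v : ℝ) :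
    incrementCov φ (c - t) (c - s) (c - v) (c - u) = incrementCov φ s t u v := by
  rw [incrementCov_comm hφ]
  unfold incrementCov
  ring_nf

lemma incrementCov_add_reverse (hφ : φ.Even) (s u h x : ℝ) :
    incrementCov φ s (s + h) u (u + x) + incrementCov φ u (u + h) s (s + (h - x)) =
      incrementCov φ s (s + h) u (u + h) := by
  have hreflect : incrementCov φ u (u + h) s (s + (h - x)) =
      incrementCov φ s (s + h) (u + x) (u + h) := by
    rw [← incrementCov_reflect hφ (s + u + h)]
    ring_nf
  rw [hreflect, incrementCov_add_adjacent]

lemma intervalIntegrable_incrementCov (hint : LocallyIntegrable φ) (s t u a b : ℝ) :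
    IntervalIntegrable (incrementCov φ s t u) volume a b := by
  have hsub (c : ℝ) : IntervalIntegrable (fun v ↦ φ (c - v)) volume a b := by
    have hφc : IntervalIntegrable φ volume (c - a) (c - b) :=
      (hint.integrableOn_isCompact isCompact_uIcc).intervalIntegrable
    simpa only [sub_sub_cancel] using hφc.comp_sub_left c
  exact (((intervalIntegrable_const.add (hsub s)).sub (hsub t)).sub
    intervalIntegrable_const).const_mul (1 / 2)

lemma integral_incrementCov_add_swap (hφ : φ.Even) (hint : LocallyIntegrable φ) (s u h : ℝ) :
    (∫ x in (0 : ℝ)..h, incrementCov φ s (s + h) u (u + x))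
        + ∫ x in (0 : ℝ)..h, incrementCov φ u (u + h) s (s + x) =
      h * incrementCov φ s (s + h) u (u + h) := by
  have hintegrable (s u : ℝ) :
      IntervalIntegrable (fun x ↦ incrementCov φ s (s + h) u (u + x)) volume 0 h := by
    simpa using
      (intervalIntegrable_incrementCov hint s (s + h) u u (u + h)).comp_add_left u
  calc
    _ = (∫ x in (0 : ℝ)..h, incrementCov φ s (s + h) u (u + x))
        + ∫ x in (0 : ℝ)..h, incrementCov φ u (u + h) s (s + (h - x)) := by
      rw [intervalIntegral.integral_comp_sub_left
        (fun x ↦ incrementCov φ u (u + h) s (s + x)), sub_self, sub_zero]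
    _ = ∫ x in (0 : ℝ)..h, (incrementCov φ s (s + h) u (u + x)
        + incrementCov φ u (u + h) s (s + (h - x))) := by
      refine (intervalIntegral.integral_add (hintegrable s u) ?_).symm
      simpa using ((hintegrable u s).comp_sub_left h).symm
    _ = h * incrementCov φ s (s + h) u (u + h) := by
      simp [incrementCov_add_reverse hφ]

end IncrementCov

theorem stmt19_general {φ : ℝ → ℝ} (hφ : φ.Even) (hint : LocallyIntegrable φ) (s u h : ℝ) :
    trapezoidalErrorCov φ s u h + trapezoidalErrorCov φ u s h = 0 := by
  have hintegral := integral_incrementCov_add_swap hφ hint s u h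
  unfold trapezoidalErrorCov
  rw [incrementCov_comm hφ u (u + h) s (s + h)]
  linarith

lemma even_abs_rpow (p : ℝ) : Function.Even fun r : ℝ ↦ |r| ^ p :=
  fun r ↦ congrArg (· ^ p) (abs_neg r)

lemma locallyIntegrable_abs_rpow {p : ℝ} (hp : 0 ≤ p) :
    LocallyIntegrable fun r : ℝ ↦ |r| ^ p :=
  (continuous_abs.rpow_const fun _ ↦ Or.inr hp).locallyIntegrable

lemma adag_eq_trapezoidalErrorCov (H : ℝ) (k l : ℕ) :
    adag H k l = trapezoidalErrorCov (fun r ↦ |r| ^ (2 * H)) (k - 1) (l - 1) 1 := by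
  simp only [adag, DH, trapezoidalErrorCov, incrementCov, sub_add_cancel]

theorem stmt19 (H : ℝ) (hH0 : 0 < H) (hH1 : H < 1) :
    ∀ k l : ℕ, 1 ≤ k → 1 ≤ l → adag H k l + adag H l k = 0 := by
  intro k l _ _
  simpa only [adag_eq_trapezoidalErrorCov] using
    stmt19_general (even_abs_rpow _) (locallyIntegrable_abs_rpow (by positivity)) _ _ _
end
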